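/- Let b₀ > 0 and let a : [0,∞) → ℝ satisfy ∫₀^R a(r)² r dr < ∞ for every R > 0, be bounded from above on every compact subset of [0,∞), and suppose there is r₁ > 0 such that a is differentiable on [r₁,∞) with a'(r) = b₀ for all r ≥ r₁. Then for every n ≥ 1 the function p ↦ μ_{n,0}(p) is not monotone on ℝ: there exist p₁ < p₂ with μ_{n,0}(p₁) > μ_{n,0}(p₂), and there exist p₃ < p₄ with μ_{n,0}(p₃) < μ_{n,0}(p₄). Moreover, if a(r) = b₀ r for all r ≥ 0, then the points p₁ < p₂ with μ_{n,0}(p₁) > μ_{n,0}(p₂) can be chosen with p₂ ≤ 0. -/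

import Mathlib

open MeasureTheory Set Filter

noncomputable section

/-- A radial test function: smooth, compactly supported, with support in `(0,∞)`. -/
def IsTestR (g : ℝ → ℝ) : Prop :=
  ContDiff ℝ (⊤ : ℕ∞) g ∧ HasCompactSupport g ∧ tsupport g ⊆ Set.Ioi 0

/-- The quadratic form
`l_m[g;p] = ∫₀^∞ (|g'|² + (m² - 1/4) r⁻² |g|² + (a(r)+p)² |g|²) dr`
of the fiber operator `L_m(p)` in `L²((0,∞))`. -/
def lForm (a : ℝ → ℝ) (m : ℤ) (p : ℝ) (g : ℝ → ℝ) : ℝ :=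
  ∫ r in Set.Ioi (0:ℝ),
    ((deriv g r) ^ 2 + ((m : ℝ) ^ 2 - 1/4) * r⁻¹ ^ 2 * (g r) ^ 2
      + (a r + p) ^ 2 * (g r) ^ 2)

/-- The `n`-th min-max value `μ_{n,m}(p)`: the infimum, over `n`-dimensional subspaces `V` of
`C_c^∞((0,∞))`, of the supremum of the Rayleigh quotient `l_m[g;p]/‖g‖²` over nonzero `g ∈ V`. -/
def muRadial (a : ℝ → ℝ) (m : ℤ) (n : ℕ) (p : ℝ) : ℝ :=
  sInf {S : ℝ | ∃ f : Fin n → (ℝ → ℝ), (∀ i, IsTestR (f i)) ∧ LinearIndependent ℝ f ∧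
    S = sSup {R : ℝ | ∃ g : ℝ → ℝ, g ∈ Submodule.span ℝ (Set.range f) ∧ g ≠ 0 ∧
      R = lForm a m p g / ∫ r in Set.Ioi (0:ℝ), (g r) ^ 2}}

/-- smooth compactly supported -/
def TC (h : ℝ → ℝ) : Prop := ContDiff ℝ (⊤ : ℕ∞) h ∧ HasCompactSupport h

lemma TC.cont {h : ℝ → ℝ} (H : TC h) : Continuous h := H.1.continuous

lemma TC.contD {h : ℝ → ℝ} (H : TC h) : Continuous (deriv h) :=
  H.1.continuous_deriv (by simp)

lemma TC.hd {h : ℝ → ℝ} (H : TC h) (x : ℝ) : HasDerivAt h (deriv h x) x :=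
  ((H.1.differentiable (by simp)) x).hasDerivAt

lemma TC.integral_deriv {F F' : ℝ → ℝ} (hF : HasCompactSupport F) (hc : Continuous F)
    (hd : ∀ x, HasDerivAt F (F' x) x) (hc' : Continuous F') : ∫ x, F' x = 0 := by
  have e : F' = deriv F := funext fun x => ((hd x).deriv).symm
  refine integral_eq_zero_of_hasDerivAt_of_integrable hd ?_ (hc.integrable_of_hasCompactSupport hF)
  exact hc'.integrable_of_hasCompactSupport (e ▸ hF.deriv)

lemma TC.int {h w : ℝ → ℝ} (H : TC h) (hw : Continuous w) : Integrable (fun x => h x * w x) :=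
  (H.cont.mul hw).integrable_of_hasCompactSupport H.2.mul_right

lemma TC.intD {h w : ℝ → ℝ} (H : TC h) (hw : Continuous w) :
    Integrable (fun x => deriv h x * w x) :=
  (H.contD.mul hw).integrable_of_hasCompactSupport H.2.deriv.mul_right

lemma lin3 {μ : Measure ℝ} {f g h : ℝ → ℝ} (α β γ : ℝ) (hf : Integrable f μ) (hg : Integrable g μ)
    (hh : Integrable h μ) : ∫ x, (α * f x + β * g x + γ * h x) ∂μ =
      α * (∫ x, f x ∂μ) + β * (∫ x, g x ∂μ) + γ * ∫ x, h x ∂μ := by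
  have h1 : Integrable (fun x => α * f x + β * g x) μ := (hf.const_mul α).add (hg.const_mul β)
  rw [integral_add h1 (hh.const_mul γ), integral_add (hf.const_mul α) (hg.const_mul β),
    integral_const_mul, integral_const_mul, integral_const_mul]

/-- ladder identity -/
lemma ladder (b r0 : ℝ) {h : ℝ → ℝ} (H : TC h) :
    ∫ x, ((deriv h x)^2 + b^2 * (x-r0)^2 * (h x)^2) =
      (∫ x, (deriv h x + b * (x - r0) * h x)^2) + b * ∫ x, (h x)^2 := by
  have hc := H.cont
  have hc' := H.contD
  have z : ∫ x, (deriv h x * (2 * b * (x-r0) * h x) + b * (h x)^2) = 0 := by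
    refine TC.integral_deriv (F := fun x => h x * (b * (x-r0) * h x)) H.2.mul_right ?_ ?_ ?_
    · fun_prop
    · intro x
      have := (H.hd x).mul (((((hasDerivAt_id x).sub_const r0).const_mul b).mul (H.hd x)))
      refine this.congr_deriv ?_
      simp; ring
    · fun_prop
  have i1 : Integrable (fun x => (deriv h x + b * (x - r0) * h x)^2) := by
    have := (H.intD (w := fun x => deriv h x + 2* b * (x-r0) * h x) (by fun_prop)).add
      (H.int (w := fun x => b^2 * (x-r0)^2 * h x) (by fun_prop))
    refine this.congr (Eventually.of_forall fun x => ?_)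
    simp; ring
  have i2 : Integrable (fun x => (h x)^2) := by
    simpa [pow_two] using H.int hc
  have i3 : Integrable (fun x => (deriv h x * (2 * b * (x-r0) * h x) + b * (h x)^2)) :=
    (H.intD (by fun_prop)).add (i2.const_mul b)
  have e := integral_sub (i1.add (i2.const_mul b)) i3
  rw [z, sub_zero, integral_add' i1 (i2.const_mul b), integral_const_mul] at e
  rw [← e]
  congr 1; ext x; simp only [Pi.add_apply]; ring

lemma exists_prim (b r0 : ℝ) {h : ℝ → ℝ} (H : TC h)
    (h0 : ∫ x, h x * Real.exp (-b * (x-r0)^2/2) = 0) :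
    ∃ k, TC k ∧ ∀ x, h x = - deriv k x + b * (x - r0) * k x := by
  obtain ⟨L, hL⟩ := H.2.isCompact.isBounded.subset_closedBall 0
  have hz : ∀ x, L < |x| → h x = 0 := by
    intro x hx
    by_contra hne
    have := hL (subset_tsupport _ hne)
    simp at this
    linarith
  set φ : ℝ → ℝ := fun x => h x * Real.exp (-b * (x-r0)^2/2) with hφ
  have hφs : ContDiff ℝ (⊤ : ℕ∞) φ := by
    have := H.1
    fun_prop
  set F : ℝ → ℝ := fun x => ∫ t in (-(|L|+1))..x, φ t with hF
  have hFd : ∀ x, HasDerivAt F (φ x) x := fun x =>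
    intervalIntegral.integral_hasDerivAt_right (hφs.continuous.intervalIntegrable _ _)
      (hφs.continuous.stronglyMeasurableAtFilter _ _) hφs.continuous.continuousAt
  have hFs : ContDiff ℝ (⊤ : ℕ∞) F := by
    rw [contDiff_infty_iff_deriv]
    refine ⟨fun x => (hFd x).differentiableAt, ?_⟩
    have : deriv F = φ := funext fun x => (hFd x).deriv
    rwa [this]
  have hF0 : ∀ x, |L| + 1 < |x| → F x = 0 := by
    intro x hx
    rcases lt_abs.1 hx with hx | hx
    · rw [hF, ← h0]
      simp only
      rw [intervalIntegral.integral_of_le (by linarith [abs_nonneg L])]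
      apply setIntegral_eq_integral_of_forall_compl_eq_zero
      intro y hy
      have : L < |y| := by
        have := le_abs_self L
        by_contra hcon
        push Not at hcon
        have := abs_le.1 hcon
        exact hy ⟨by linarith, by linarith⟩
      simp [hφ, hz y this]
    · simp only [hF]
      rw [intervalIntegral.integral_symm, intervalIntegral.integral_of_le (by linarith),
        setIntegral_eq_zero_of_forall_eq_zero, neg_zero]
      intro y hy
      have : L < |y| := by
        have h1 := le_abs_self L
        have h2 := neg_le_abs y
        have := hy.2
        linarith
      simp [hφ, hz y this]
  refine ⟨fun x => - Real.exp (b * (x-r0)^2/2) * F x, ⟨by fun_prop, ?_⟩, ?_⟩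
  · refine HasCompactSupport.intro (isCompact_closedBall (0:ℝ) (|L|+1)) fun x hx => ?_
    rw [hF0 x, mul_zero]
    simpa using hx
  · intro x
    have d1 : HasDerivAt (fun x => b * (x-r0)^2/2) (b * (x - r0)) x := by
      have := (((((hasDerivAt_id x).sub_const r0).pow 2).const_mul b).div_const 2)
      refine this.congr_deriv ?_
      simp; ring
    have := (d1.exp.neg).mul (hFd x)
    have this' := this.deriv
    have e : Real.exp (b * (x-r0)^2/2) * Real.exp (-b * (x-r0)^2/2) = 1 := by
      rw [← Real.exp_add]; ring_nf; simp
    simp only [Pi.neg_apply, hφ] at this'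
    have t2 : deriv (fun x => -Real.exp (b * (x - r0) ^ 2 / 2) * F x) x = _ := this'
    rw [t2]
    linear_combination - h x * e

lemma ho_aux (b r0 : ℝ) (hb : 0 < b) (m : ℕ) : ∀ h : ℝ → ℝ, TC h →
    (∀ j < m, ∫ x, h x * ((x-r0)^j * Real.exp (-b * (x-r0)^2/2)) = 0) →
    2 * m * b * ∫ x, (h x)^2 ≤ ∫ x, (deriv h x + b * (x - r0) * h x)^2 := by
  induction m with
  | zero =>
    intro h H _
    simp
    exact integral_nonneg fun x => sq_nonneg _
  | succ m ih =>
    intro h H hm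
    obtain ⟨k, K, hk⟩ := exists_prim b r0 H (by simpa using hm 0 (by simp))
    have hc := H.cont
    have hc' := H.contD
    have kc := K.cont
    have kc' := K.contD
    have ihk := ih k K (by
      intro j hj
      have h1 := hm (j+1) (by omega)
      have z : ∫ x, ((j+1) * (k x * ((x-r0)^j * Real.exp (-b * (x-r0)^2/2)))
          - h x * ((x-r0)^(j+1) * Real.exp (-b * (x-r0)^2/2))) = 0 := by
        refine TC.integral_deriv (F := fun x => k x * ((x-r0)^(j+1) * Real.exp (-b * (x-r0)^2/2)))
          K.2.mul_right ?_ ?_ ?_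
        · fun_prop
        · intro x
          have d1 : HasDerivAt (fun x => -b * (x-r0)^2/2) (-b * (x - r0)) x := by
            have := (((((hasDerivAt_id x).sub_const r0).pow 2).const_mul (-b)).div_const 2)
            refine this.congr_deriv ?_
            simp; ring
          have := (K.hd x).mul ((((hasDerivAt_id x).sub_const r0).pow (j+1)).mul d1.exp)
          refine this.congr_deriv ?_
          rw [hk]
          simp; ring
        · fun_prop
      rw [integral_sub, h1, integral_const_mul, sub_zero] at z
      · rcases mul_eq_zero.1 z with z | z
        · exfalso
          have : (0:ℝ) < j + 1 := by positivity
          exact this.ne' z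
        · exact z
      · exact (K.int (by fun_prop)).const_mul _
      · exact (H.int (by fun_prop)))
    -- ∫ h² = ∫ (Ak)² + 2b ∫ k²
    have e1 : ∫ x, (h x)^2 = (∫ x, (deriv k x + b * (x - r0) * k x)^2) + 2 * b * ∫ x, (k x)^2 := by
      have l1 := ladder b r0 K
      have l2 := ladder (-b) r0 K
      have : ∫ x, (h x)^2 = ∫ x, (deriv k x + -b * (x - r0) * k x)^2 := by
        congr 1; ext x; rw [hk]; ring
      rw [this]
      rw [neg_sq] at l2
      linarith
    have z : ∫ x, ((deriv h x + b * (x-r0) * h x) * k x - (h x)^2) = 0 := by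
      refine TC.integral_deriv (F := fun x => h x * k x) H.2.mul_right ?_ ?_ ?_
      · fun_prop
      · intro x
        have := (H.hd x).mul (K.hd x)
        refine this.congr_deriv ?_
        have := hk x
        linear_combination (h x) * this
      · fun_prop
    have i1 : Integrable (fun x => (deriv h x + b * (x - r0) * h x)^2) := by
      have := (H.intD (w := fun x => deriv h x + 2* b * (x-r0) * h x) (by fun_prop)).add
        (H.int (w := fun x => b^2 * (x-r0)^2 * h x) (by fun_prop))
      refine this.congr (Eventually.of_forall fun x => ?_)
      simp; ring
    have i2 : Integrable (fun x => (h x)^2) := by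
      simpa [pow_two] using H.int hc
    have i3 : Integrable (fun x => (k x)^2) := by
      simpa [pow_two] using K.int kc
    have i4 : Integrable (fun x => (deriv h x + b * (x-r0) * h x) * k x) := by
      simpa [mul_comm] using K.int (w := fun x => deriv h x + b * (x-r0) * h x) (by fun_prop)
    rw [integral_sub i4 i2, sub_eq_zero] at z
    set c : ℝ := 2 * (m+1) * b with hcdef
    have pos : 0 ≤ ∫ x, (deriv h x + b * (x-r0) * h x - c * k x)^2 :=
      integral_nonneg fun x => sq_nonneg _
    have ex : ∫ x, (deriv h x + b * (x-r0) * h x - c * k x)^2 =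
        (∫ x, (deriv h x + b * (x - r0) * h x)^2)
        - 2 * c * (∫ x, (deriv h x + b * (x-r0) * h x) * k x) + c^2 * ∫ x, (k x)^2 := by
      have := lin3 1 (-(2*c)) (c^2) i1 i4 i3
      rw [sub_eq_add_neg, ← neg_mul, ← one_mul (∫ x, (deriv h x + b * (x - r0) * h x)^2), ← this]
      congr 1; ext x; ring
    have hcp : 0 < c := by positivity
    have : c * (∫ x, (k x)^2) ≤ ∫ x, (h x)^2 := by
      rw [e1, hcdef]; linarith
    have := mul_le_mul_of_nonneg_left this hcp.le
    push_cast
    rw [ex, z] at pos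
    nlinarith

lemma ho_lower (b r0 : ℝ) (hb : 0 < b) (m : ℕ) (h : ℝ → ℝ) (H : TC h)
    (hm : ∀ j < m, ∫ x, h x * ((x-r0)^j * Real.exp (-b * (x-r0)^2/2)) = 0) :
    (2 * m + 1) * b * ∫ x, (h x)^2 ≤ ∫ x, ((deriv h x)^2 + b^2 * (x-r0)^2 * (h x)^2) := by
  rw [ladder b r0 H]
  linarith [ho_aux b r0 hb m h H hm]

open Polynomial in
/-- Gaussian moment functional -/
def GI (b : ℝ) (P : ℝ[X]) : ℝ := ∫ x, P.eval x * Real.exp (-b * x^2)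

open Polynomial in
lemma GI_int (b : ℝ) (hb : 0 < b) (P : ℝ[X]) :
    Integrable (fun x => P.eval x * Real.exp (-b * x^2)) := by
  induction P using Polynomial.induction_on' with
  | add p q hp hq => 
    refine (hp.add hq).congr (Eventually.of_forall fun x => ?_)
    simp; ring
  | monomial n a =>
    have := (integrable_rpow_mul_exp_neg_mul_sq hb (s := n) (by
      have : (0:ℝ) ≤ n := by positivity
      linarith)).const_mul a
    refine this.congr (Eventually.of_forall fun x => ?_)
    simp; ring

open Polynomial in
lemma GI_add (b : ℝ) (hb : 0 < b) (P Q : ℝ[X]) : GI b (P + Q) = GI b P + GI b Q := by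
  unfold GI
  rw [← integral_add (GI_int b hb P) (GI_int b hb Q)]
  congr 1; ext x; simp; ring

open Polynomial in
lemma GI_smul (b : ℝ) (c : ℝ) (P : ℝ[X]) : GI b (C c * P) = c * GI b P := by
  unfold GI
  rw [← integral_const_mul]
  congr 1; ext x; simp; ring

open Polynomial in
lemma GI_sq (b : ℝ) (P : ℝ[X]) : 0 ≤ GI b (P^2) :=
  integral_nonneg fun x => by simp; positivity

open Polynomial in
lemma GI_ibp (b : ℝ) (hb : 0 < b) (P : ℝ[X]) : GI b (derivative P) = 2 * b * GI b (X * P) := by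
  have : ∫ x, (derivative P + C (-(2 * b)) * (X * P)).eval x * Real.exp (-b * x^2) = 0 := by
    refine integral_eq_zero_of_hasDerivAt_of_integrable
      (f := fun x => P.eval x * Real.exp (-b * x^2)) ?_ (GI_int b hb _) (GI_int b hb P)
    intro x
    have d1 : HasDerivAt (fun x => -b * x^2) (-(2 * b) * x) x := by
      refine ((hasDerivAt_pow 2 x).const_mul (-b)).congr_deriv ?_
      simp; ring
    refine ((P.hasDerivAt x).mul d1.exp).congr_deriv ?_
    simp; ring
  change GI b _ = 0 at this
  rw [GI_add b hb, GI_smul] at this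
  linarith

open Polynomial in
/-- reverse Poincare inequality -/
lemma GI_rev (b : ℝ) (hb : 0 < b) (d : ℕ) : ∀ P : ℝ[X], P.natDegree ≤ d →
    GI b ((derivative P)^2) ≤ 2 * b * d * GI b (P^2) := by
  induction d with
  | zero =>
    intro P hP
    rw [natDegree_eq_zero.1 (Nat.le_zero.1 hP) |>.choose_spec.symm]
    simp [GI]
  | succ d ih =>
    intro P hP
    have ih' := ih (derivative P) (by have := natDegree_derivative_le P; omega)
    set c : ℝ := 2 * b * (d+1) with hc
    have hcp : 0 < c := by positivity
    set D := derivative P with hD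
    set D2 := derivative D with hD2
    -- moments
    have e1 := GI_ibp b hb (P * D)
    have e2 := GI_ibp b hb (D * D2)
    have e3 := GI_ibp b hb (X * D * D)
    rw [derivative_mul, GI_add b hb] at e1 e2 e3
    rw [← hD, ← hD2] at e1
    rw [← hD2] at e2
    have pos := GI_sq b (-D2 + C (2*b) * X * D - C c * P)
    have ex : (-D2 + C (2*b) * X * D - C c * P)^2 = D2^2 + C (-(2 * (2*b))) * (X * (D * D2))
        + C ((2*b)^2) * (X * (X * D * D)) + C (2 * c) * (P * D2)
        + C (-(2*c*(2*b))) * (X * (P * D)) + C (c^2) * P^2 := by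
      simp only [C_mul, C_neg, C_pow]
      have : (C (2:ℝ) : ℝ[X]) = 2 := rfl
      rw [this]
      ring
    rw [ex] at pos
    simp only [GI_add b hb, GI_smul] at pos
    have e3' : GI b (derivative (X * D) * D) + GI b (X * D * derivative D)
        = GI b (D^2) + 2 * GI b (X * (D * D2)) := by
      have : derivative (X * D) * D = D^2 + X * (D * D2) := by
        rw [derivative_mul, derivative_X]; ring
      rw [this, GI_add b hb, ← hD2]
      have : X * D * D2 = X * (D * D2) := by ring
      rw [this]; ring
    rw [e3'] at e3
    have s1 : D * D = D^2 := by ring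
    have s2 : D2 * D2 = D2^2 := by ring
    rw [s1] at e1
    rw [s2] at e2
    have s3 : c * (c * GI b (P^2) - GI b (D^2)) ≥ 0 := by
      push_cast at ih'
      nlinarith
    push_cast
    have := nonneg_of_mul_nonneg_right s3 hcp
    linarith

open Polynomial in
lemma GI_x2 (b : ℝ) (hb : 0 < b) (d : ℕ) (P : ℝ[X]) (hP : P.natDegree ≤ d) :
    GI b ((X * P)^2) ≤ (2 * d + 1) / b * GI b (P^2) := by
  have h1 := GI_rev b hb d P hP
  have pos := GI_sq b (derivative P - C b * (X * P))
  have ex : (derivative P - C b * (X * P))^2 = (derivative P)^2 + C (-(2*b)) * (X * (P * derivative P))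
      + C (b^2) * (X * P)^2 := by
    simp only [C_mul, C_neg, C_pow]
    have : (C (2:ℝ) : ℝ[X]) = 2 := rfl
    rw [this]
    ring
  rw [ex] at pos
  have e := GI_ibp b hb (X * P^2)
  have s : derivative (X * P^2) = P^2 + C 2 * (X * (P * derivative P)) := by
    have : (C (2:ℝ) : ℝ[X]) = 2 := rfl
    rw [derivative_mul, derivative_X, derivative_pow]
    simp; ring
  rw [s] at e
  have s2 : X * (X * P^2) = (X * P)^2 := by ring
  rw [s2] at e
  simp only [GI_add b hb, GI_smul] at pos e
  rw [div_mul_eq_mul_div, le_div_iff₀ hb]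
  have : b * (GI b ((X*P)^2) * b) ≤ b * ((2 * d + 1) * GI b (P^2)) := by nlinarith
  exact le_of_mul_le_mul_left this hb

open Polynomial in
lemma GI_x4 (b : ℝ) (hb : 0 < b) (d : ℕ) (P : ℝ[X]) (hP : P.natDegree ≤ d) :
    GI b ((X * (X * P))^2) ≤ (2 * d + 3) / b * ((2 * d + 1) / b) * GI b (P^2) := by
  have h1 := GI_x2 b hb d P hP
  have h2 := GI_x2 b hb (d+1) (X * P) (by
    refine natDegree_mul_le.trans ?_
    have := natDegree_X_le (R := ℝ)
    omega)
  push_cast at h2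
  calc _ ≤ _ := h2
    _ = (2 * d + 3) / b * GI b ((X * P)^2) := by ring
    _ ≤ (2 * d + 3) / b * ((2 * d + 1) / b * GI b (P^2)) := by gcongr
    _ = _ := by ring

lemma exists_cutoff : ∃ χ : ℝ → ℝ, ∃ C : ℝ, ContDiff ℝ (⊤ : ℕ∞) χ ∧ (∀ x, |x| ≤ 1 → χ x = 1) ∧
    (∀ x, 2 ≤ |x| → χ x = 0) ∧ (∀ x, 0 ≤ χ x) ∧ (∀ x, χ x ≤ 1) ∧ 0 ≤ C ∧ (∀ x, |deriv χ x| ≤ C) ∧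
    (∀ x, |x| < 1 → deriv χ x = 0) := by
  let f : ContDiffBump (0:ℝ) := ⟨1, 2, by norm_num, by norm_num⟩
  have hs : ContDiff ℝ (⊤ : ℕ∞) f := f.contDiff
  obtain ⟨C, hC⟩ := f.hasCompactSupport.deriv.exists_bound_of_continuous (hs.continuous_deriv (by simp))
  have h1 : ∀ x, |x| ≤ 1 → f x = 1 := fun x hx => f.one_of_mem_closedBall (by simpa using hx)
  refine ⟨f, C, hs, h1, fun x hx => f.zero_of_le_dist (by simpa using hx), fun x => f.nonneg,
    fun x => f.le_one, (norm_nonneg _).trans (hC 0), hC, fun x hx => ?_⟩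
  have : (f : ℝ → ℝ) =ᶠ[nhds x] fun _ => 1 := by
    have : {y : ℝ | |y| < 1} ∈ nhds x := (isOpen_lt continuous_abs continuous_const).mem_nhds hx
    filter_upwards [this] with y hy
    exact h1 y (le_of_lt hy)
  rw [this.deriv_eq]; simp

open Polynomial in
/-- The trial function. -/
def trialF (χ : ℝ → ℝ) (b R : ℝ) (P : ℝ[X]) (x : ℝ) : ℝ :=
  (χ (x/R) * Real.exp (-b * x^2/2)) * P.eval x

set_option maxHeartbeats 1000000 in
open Polynomial in
lemma trial_bound (b : ℝ) (hb : 0 < b) (d : ℕ) (χ : ℝ → ℝ) (C1 : ℝ) (hs : ContDiff ℝ (⊤ : ℕ∞) χ)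
    (h1 : ∀ x, |x| ≤ 1 → χ x = 1) (h2 : ∀ x, 2 ≤ |x| → χ x = 0) (h3 : ∀ x, 0 ≤ χ x)
    (h4 : ∀ x, χ x ≤ 1) (hC : 0 ≤ C1) (h5 : ∀ x, |deriv χ x| ≤ C1)
    (h6 : ∀ x, |x| < 1 → deriv χ x = 0) :
    ∃ C > 0, ∀ R ≥ 1, ∀ P : ℝ[X], P.natDegree ≤ d →
      TC (trialF χ b R P) ∧
      (∫ x, ((deriv (trialF χ b R P) x)^2 + b^2 * (x-0)^2 * (trialF χ b R P x)^2)) ≤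
        (2 * d + 1) * b * (∫ x, (trialF χ b R P x)^2) + C / R^4 * GI b (P^2) ∧
      (1 - C / R^4) * GI b (P^2) ≤ ∫ x, (trialF χ b R P x)^2 := by
  set K4 : ℝ := (2 * d + 3) / b * ((2 * d + 1) / b) with hK4
  have hK4p : 0 ≤ K4 := by positivity
  set K := C1^2 + C1 with hK
  have hKp : 0 ≤ K := by positivity
  refine ⟨K4 * (1 + K + K * (2 * b * d) + 2 * b * d) + 1, by positivity, ?_⟩
  intro R hR P hP
  have hR0 : 0 < R := by linarith
  set h := trialF χ b R P with hh
  have H : TC h := by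
    constructor
    · have : ContDiff ℝ (⊤ : ℕ∞) (fun x => P.eval x) := by
        simpa using P.contDiff_aeval (𝕜 := ℝ) ((⊤ : ℕ∞) : WithTop ℕ∞)
      unfold h trialF
      fun_prop
    · refine HasCompactSupport.intro (isCompact_closedBall (0:ℝ) (2 * R)) fun x hx => ?_
      have : 2 * R < |x| := by simpa using hx
      unfold h trialF
      rw [h2, zero_mul, zero_mul]
      rw [abs_div, abs_of_pos hR0, le_div_iff₀ hR0]
      exact this.le
  have x4 := GI_x4 b hb d P hP
  have x4' := GI_x4 b hb d (derivative P) (by have := natDegree_derivative_le P; omega)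
  have rev := GI_rev b hb d P hP
  have hG : ∀ x : ℝ, Real.exp (-b * x^2/2)^2 = Real.exp (-b * x^2) := by
    intro x; rw [← Real.exp_nat_mul]; congr 1; push_cast; ring
  have hA : ∀ x, deriv h x + b * (x-0) * h x =
      (deriv χ (x/R) / R * P.eval x + χ (x/R) * (derivative P).eval x) * Real.exp (-b * x^2/2) := by
    intro x
    have d1 : HasDerivAt (fun x => -b * x^2/2) (-b * x) x := by
      refine (((hasDerivAt_pow 2 x).const_mul (-b)).div_const 2).congr_deriv ?_
      simp; ring
    have d2 : HasDerivAt (fun x => χ (x/R)) (deriv χ (x/R) * (1/R)) x :=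
      HasDerivAt.comp x (((hs.differentiable (by simp)) (x/R)).hasDerivAt)
        ((hasDerivAt_id x).div_const R)
    have d3 := (d2.mul d1.exp).mul (P.hasDerivAt x)
    have d4 : deriv h x = _ := d3.deriv
    rw [d4]
    simp [h, trialF]
    ring
  have t1 : ∀ x, R ≤ |x| → 1 ≤ x^4 / R^4 := by
    intro x hx
    rw [one_le_div (by positivity)]
    calc R^4 ≤ |x|^4 := by gcongr
      _ = x^4 := by rw [← abs_pow, abs_of_nonneg (by positivity)]
  have bound1 : ∀ x, (deriv h x + b * (x-0) * h x)^2 ≤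
      ((derivative P)^2 + C (K / R^4) * ((X * (X * P))^2 + (X * (X * derivative P))^2)).eval x
        * Real.exp (-b * x^2) := by
    intro x
    rw [hA, mul_pow, hG]
    refine mul_le_mul_of_nonneg_right ?_ (Real.exp_pos _).le
    simp only [eval_add, eval_pow, eval_mul, eval_C, eval_X]
    generalize (derivative P).eval x = q
    generalize P.eval x = p
    have e : K / R^4 * ((x * (x * p))^2 + (x * (x * q))^2) = K * (x^4/R^4) * (p^2+q^2) := by ring
    rw [e]
    rcases lt_or_ge |x| R with hx | hx
    · have hx' : |x/R| < 1 := by rw [abs_div, abs_of_pos hR0, div_lt_one hR0]; exact hx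
      rw [h6 _ hx', h1 _ hx'.le]
      have : 0 ≤ K * (x^4/R^4) * (p^2+q^2) := by positivity
      simp; linarith
    · have t := t1 x hx
      have hu : |deriv χ (x/R) / R| ≤ C1 := by
        rw [abs_div, abs_of_pos hR0]
        exact (div_le_self (abs_nonneg _) hR).trans (h5 _)
      generalize deriv χ (x/R) / R = u at hu
      have hv0 := h3 (x/R)
      have hv1 := h4 (x/R)
      generalize χ (x/R) = v at hv0 hv1
      have hu2 : u^2 ≤ C1^2 := sq_le_sq' (abs_le.1 hu).1 (abs_le.1 hu).2
      have hv2 : v^2 ≤ 1 := by nlinarith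
      have huv : |u * v| ≤ C1 := by
        rw [abs_mul, abs_of_nonneg hv0]
        nlinarith [abs_nonneg u]
      have c1 : 2 * (u * v) * (p * q) ≤ C1 * (p^2+q^2) := by
        have a1 : (u*v) * (2 * (p*q)) ≤ |u*v| * |2 * (p*q)| := by
          rw [← abs_mul]; exact le_abs_self _
        have a2 : |2 * (p*q)| ≤ p^2+q^2 := by
          rw [abs_le]; constructor <;> nlinarith [sq_nonneg (p-q), sq_nonneg (p+q)]
        have a3 : |u*v| * |2 * (p*q)| ≤ C1 * (p^2+q^2) := by gcongr
        linarith
      have c2 : K * 1 * (p^2+q^2) ≤ K * (x^4/R^4) * (p^2+q^2) := by gcongr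
      have c3 : u^2 * p^2 ≤ C1^2 * p^2 := by gcongr
      have c4 : v^2 * q^2 ≤ 1 * q^2 := by gcongr
      have c5 : 0 ≤ C1^2 * q^2 := by positivity
      rw [hK] at c2 ⊢
      nlinarith
  have bound2 : ∀ x, (P^2 + C (-(1 / R^4)) * (X * (X * P))^2).eval x * Real.exp (-b * x^2)
      ≤ (h x)^2 := by
    intro x
    have : (h x)^2 = (χ (x/R) * P.eval x)^2 * Real.exp (-b * x^2) := by
      rw [← hG]; simp [h, trialF]; ring
    rw [this]
    refine mul_le_mul_of_nonneg_right ?_ (Real.exp_pos _).le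
    simp only [eval_add, eval_pow, eval_mul, eval_C, eval_X]
    generalize P.eval x = p
    have e : -(1 / R^4) * (x * (x * p))^2 = - ((x^4/R^4) * p^2) := by ring
    rw [e]
    rcases lt_or_ge |x| R with hx | hx
    · have hx' : |x/R| < 1 := by rw [abs_div, abs_of_pos hR0, div_lt_one hR0]; exact hx
      rw [h1 _ hx'.le]
      have : 0 ≤ (x^4/R^4) * (p^2) := by positivity
      linarith
    · have t := t1 x hx
      have : 1 * p^2 ≤ (x^4/R^4) * (p^2) := by gcongr
      have : 0 ≤ (χ (x/R) * p)^2 := by positivity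
      linarith
  have hc := H.cont
  have hc' := H.contD
  have i1 : Integrable (fun x => (deriv h x + b * (x - 0) * h x)^2) := by
    have := (H.intD (w := fun x => deriv h x + 2* b * (x-0) * h x) (by fun_prop)).add
      (H.int (w := fun x => b^2 * (x-0)^2 * h x) (by fun_prop))
    refine this.congr (Eventually.of_forall fun x => ?_)
    simp; ring
  have i2 : Integrable (fun x => (h x)^2) := by
    simpa [pow_two] using H.int hc
  have J1 := integral_mono i1 (GI_int b hb _) bound1
  have J2 := integral_mono (GI_int b hb _) i2 bound2
  change _ ≤ GI b _ at J1
  change GI b _ ≤ _ at J2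
  simp only [GI_add b hb, GI_smul] at J1 J2
  have hN := GI_sq b P
  set N := GI b (P^2) with hNdef
  have hR4 : (0:ℝ) < 1 / R^4 := by positivity
  have y4 : K4 * GI b ((derivative P)^2) ≤ K4 * (2 * b * d * N) := by gcongr
  have z1 : 1 / R^4 * GI b ((X * (X * P))^2) ≤ 1/R^4 * (K4 * N) := by gcongr
  have z2 : K / R^4 * (GI b ((X * (X * P))^2) + GI b ((X * (X * derivative P))^2)) ≤
      K / R^4 * (K4 * N + K4 * (2 * b * d * N)) := by
    refine mul_le_mul_of_nonneg_left ?_ (by positivity)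
    linarith only [x4, x4', y4]
  set I2 := ∫ x, (h x)^2 with hI2
  have J2' : N - 1/R^4 * (K4 * N) ≤ I2 := by linarith
  refine ⟨H, ?_, ?_⟩
  · rw [ladder b 0 H]
    have w : 2 * b * d * (N - 1/R^4 * (K4 * N)) ≤ 2 * b * d * I2 := by gcongr
    have e : (K4 * (1 + K + K * (2 * b * d) + 2 * b * d) + 1) / R^4 * N =
      K / R^4 * (K4 * N + K4 * (2 * b * d * N)) + 2 * b * d * (1/R^4 * (K4 * N))
        + (1/R^4) * (K4 * N + N) := by ring
    rw [e]
    have : 0 ≤ (1/R^4) * (K4 * N + N) := by positivity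
    rw [← hI2]
    linarith
  · have e : (1 - (K4 * (1 + K + K * (2 * b * d) + 2 * b * d) + 1) / R^4) * N =
      N - 1/R^4 * (K4 * N) - (1/R^4) * (K4 * (K + K * (2 * b * d) + 2 * b * d) * N + N) := by ring
    rw [e]
    have : 0 ≤ (1/R^4) * (K4 * (K + K * (2 * b * d) + 2 * b * d) * N + N) := by positivity
    linarith

lemma IsTestR.tc {g : ℝ → ℝ} (H : IsTestR g) : TC g := ⟨H.1, H.2.1⟩

lemma IsTestR.zero {g : ℝ → ℝ} (H : IsTestR g) {x : ℝ} (hx : x ≤ 0) : g x = 0 := by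
  by_contra h
  have := H.2.2 (subset_tsupport _ h)
  exact absurd this (not_lt.2 hx)

lemma IsTestR.zeroD {g : ℝ → ℝ} (H : IsTestR g) {x : ℝ} (hx : x ≤ 0) : deriv g x = 0 := by
  by_contra h
  have := H.2.2 ((support_deriv_subset) h)
  exact absurd this (not_lt.2 hx)

lemma IsTestR.mulLeft {g w : ℝ → ℝ} (H : IsTestR g) (hw : ∀ x > 0, ContDiffAt ℝ (⊤ : ℕ∞) w x) :
    IsTestR (fun x => w x * g x) := by
  have hsub : tsupport (fun x => w x * g x) ⊆ tsupport g := by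
    apply closure_mono
    intro x hx hg
    exact hx (by simp [hg])
  refine ⟨?_, H.2.1.mono' (subset_closure.trans hsub), hsub.trans H.2.2⟩
  rw [contDiff_iff_contDiffAt]
  intro x
  by_cases hx : x ∈ tsupport (fun x => w x * g x)
  · exact (hw x (H.2.2 (hsub hx))).mul H.1.contDiffAt
  · exact contDiffAt_const.congr_of_eventuallyEq (notMem_tsupport_iff_eventuallyEq.1 hx)

/-- g / r -/
lemma IsTestR.q {g : ℝ → ℝ} (H : IsTestR g) : IsTestR (fun x => x⁻¹ * g x) :=
  H.mulLeft fun _ hx => contDiffAt_inv ℝ hx.ne'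

lemma IsTestR.intRange {g : ℝ → ℝ} (H : IsTestR g) :
    ∃ ε > 0, ∃ R, ε ≤ R ∧ ∀ x, g x ≠ 0 → x ∈ Icc ε R := by
  rcases (tsupport g).eq_empty_or_nonempty with h | h
  · refine ⟨1, one_pos, 1, le_rfl, fun x hx => ?_⟩
    have := subset_tsupport _ hx
    rw [h] at this
    exact absurd this (by simp)
  · obtain ⟨ε, h1, h2⟩ := H.2.1.isCompact.exists_isLeast h
    obtain ⟨R, h3, h4⟩ := H.2.1.isCompact.exists_isGreatest h
    exact ⟨ε, H.2.2 h1, R, h2 h3, fun x hx => ⟨h2 (subset_tsupport _ hx), h4 (subset_tsupport _ hx)⟩⟩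

lemma int_sq {g : ℝ → ℝ} (hc : Continuous g) (hs : HasCompactSupport g) :
    Integrable (fun x => (g x)^2) := by
  have : Integrable (fun x => g x * g x) := (hc.mul hc).integrable_of_hasCompactSupport hs.mul_right
  simpa [pow_two] using this

lemma IsTestR.h_cont {g : ℝ → ℝ} (H : IsTestR g) :
    Continuous (fun x => deriv g x - x⁻¹ * g x / 2) := by
  have := H.q.tc.cont
  have := H.tc.contD
  fun_prop

lemma IsTestR.h_cs {g : ℝ → ℝ} (H : IsTestR g) :
    HasCompactSupport (fun x => deriv g x - x⁻¹ * g x / 2) := by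
  have h1 : HasCompactSupport (fun x => x⁻¹ * g x / 2) := by
    exact H.q.2.1.mul_right (f' := fun _ => (2:ℝ)⁻¹)
  exact H.2.1.deriv.sub h1

/-- derivative of g²/r -/
lemma IsTestR.dF {g : ℝ → ℝ} (H : IsTestR g) (x : ℝ) :
    HasDerivAt (fun x => g x * (x⁻¹ * g x)) (2 * (x⁻¹ * g x) * (deriv g x - x⁻¹ * g x / 2)) x := by
  rcases le_or_gt x 0 with hx | hx
  · have := (H.tc.hd x).mul (H.q.tc.hd x)
    refine this.congr_deriv ?_
    rw [H.zero hx, H.zeroD hx]; simp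
  · have := (H.tc.hd x).mul ((hasDerivAt_inv hx.ne').mul (H.tc.hd x))
    refine this.congr_deriv ?_
    simp
    field_simp
    ring

lemma IsTestR.hardy {g : ℝ → ℝ} (H : IsTestR g) :
    ∫ x, ((deriv g x)^2 + (((0:ℤ):ℝ)^2 - 1/4) * x⁻¹^2 * (g x)^2) =
      ∫ x, (deriv g x - x⁻¹ * g x / 2)^2 := by
  have hq := H.q.tc.cont
  have hd := H.tc.contD
  have hg := H.tc.cont
  have z : ∫ x, (2 * (x⁻¹ * g x) * (deriv g x - x⁻¹ * g x / 2)) = 0 :=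
    TC.integral_deriv (F := fun x => g x * (x⁻¹ * g x)) H.2.1.mul_right (by fun_prop) H.dF
      (by fun_prop)
  have i1 := int_sq H.h_cont H.h_cs
  have i2 : Integrable (fun x => (2 * (x⁻¹ * g x) * (deriv g x - x⁻¹ * g x / 2))) := by
    refine (H.q.tc.int (w := fun x => 2 * (deriv g x - x⁻¹ * g x / 2)) (by fun_prop)).congr
      (Eventually.of_forall fun x => ?_)
    simp only; ring
  have := lin3 1 (1/4) (1/4) i1 i2 i2
  rw [z] at this
  simp only [mul_zero, add_zero, one_mul] at this
  rw [← this]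
  congr 1; ext x
  simp
  ring

lemma IsTestR.supb {g : ℝ → ℝ} (H : IsTestR g) (ε : ℝ) (hε : 0 < ε) (r : ℝ) :
    (g r)^2 ≤ (∫ x, (deriv g x - x⁻¹ * g x / 2)^2) / ε + ε * ∫ x, (g x)^2 := by
  have hq := H.q.tc.cont
  have hd := H.tc.contD
  have hg := H.tc.cont
  have i1 := int_sq H.h_cont H.h_cs
  have i2 := int_sq hg H.2.1
  have n1 : 0 ≤ ∫ x, (deriv g x - x⁻¹ * g x / 2)^2 := integral_nonneg fun x => sq_nonneg _
  have n2 : 0 ≤ ∫ x, (g x)^2 := integral_nonneg fun x => sq_nonneg _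
  rcases le_or_gt r 0 with hr | hr
  · rw [H.zero hr]; simp only [ne_eq, OfNat.ofNat_ne_zero, not_false_eq_true, zero_pow]; positivity
  have hF1 : ContDiff ℝ 1 (fun x => g x * (x⁻¹ * g x)) :=
    (H.1.mul H.q.1).of_le (by exact_mod_cast le_top)
  have key := HasCompactSupport.integral_Ioi_deriv_eq hF1 H.2.1.mul_right r
  have e : deriv (fun x => g x * (x⁻¹ * g x)) =
      fun x => 2 * (x⁻¹ * g x) * (deriv g x - x⁻¹ * g x / 2) := funext fun x => (H.dF x).deriv
  rw [e] at key
  simp only at key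
  have i3 : Integrable (fun x => (1/ε) * (deriv g x - x⁻¹ * g x / 2)^2 + ε * (g x)^2) :=
    (i1.const_mul _).add (i2.const_mul _)
  have i4 : Integrable (fun x => (2 * (x⁻¹ * g x) * (deriv g x - x⁻¹ * g x / 2))) := by
    refine (H.q.tc.int (w := fun x => 2 * (deriv g x - x⁻¹ * g x / 2)) (by fun_prop)).congr
      (Eventually.of_forall fun x => ?_)
    simp only; ring
  have b1 : ∫ x in Ioi r, (-r) * (2 * (x⁻¹ * g x) * (deriv g x - x⁻¹ * g x / 2)) ≤
      ∫ x in Ioi r, ((1/ε) * (deriv g x - x⁻¹ * g x / 2)^2 + ε * (g x)^2) := by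
    refine setIntegral_mono_on (i4.const_mul _).integrableOn i3.integrableOn measurableSet_Ioi ?_
    intro x hx
    have hx : r < x := hx
    have hx0 : 0 < x := hr.trans hx
    generalize hu : deriv g x - x⁻¹ * g x / 2 = u
    have hrx : r * x⁻¹ ≤ 1 := by
      rw [← div_eq_mul_inv, div_le_one hx0]; exact hx.le
    have hrx0 : 0 ≤ r * x⁻¹ := by positivity
    have t : (1/ε) * u^2 + ε * (g x)^2 + 2 * (r * x⁻¹) * (g x * u) =
        (r * x⁻¹) * (ε * (g x + u/ε)^2) + (1 - r * x⁻¹) * ((1/ε) * u^2 + ε * (g x)^2) := by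
      field_simp; ring
    have : 0 ≤ (r * x⁻¹) * (ε * (g x + u/ε)^2) := by positivity
    have : 0 ≤ (1 - r * x⁻¹) * ((1/ε) * u^2 + ε * (g x)^2) := by
      have : 0 ≤ 1 - r * x⁻¹ := by linarith
      positivity
    linarith
  have b2 : ∫ x in Ioi r, ((1/ε) * (deriv g x - x⁻¹ * g x / 2)^2 + ε * (g x)^2) ≤
      ∫ x, ((1/ε) * (deriv g x - x⁻¹ * g x / 2)^2 + ε * (g x)^2) :=
    setIntegral_le_integral i3 (Eventually.of_forall fun x => by simp only [Pi.zero_apply]; positivity)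
  rw [integral_const_mul, key] at b1
  rw [integral_add (i1.const_mul _) (i2.const_mul _), integral_const_mul, integral_const_mul] at b2
  have : -r * -(g r * (r⁻¹ * g r)) = (g r)^2 := by field_simp
  rw [this] at b1
  calc _ ≤ _ := b1.trans b2
    _ = _ := by ring

lemma IsTestR.norm_eq {g : ℝ → ℝ} (H : IsTestR g) : ∫ r in Ioi (0:ℝ), (g r)^2 = ∫ r, (g r)^2 := by
  apply setIntegral_eq_integral_of_forall_compl_eq_zero
  intro x hx
  rw [H.zero (not_lt.1 hx)]; simp

lemma IsTestR.int_hardy {g : ℝ → ℝ} (H : IsTestR g) :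
    Integrable (fun x => (deriv g x)^2 + (((0:ℤ):ℝ)^2 - 1/4) * x⁻¹^2 * (g x)^2) := by
  have h1 := int_sq H.tc.contD H.2.1.deriv
  have h2 := (int_sq H.q.tc.cont H.q.2.1).const_mul (-1/4)
  refine (h1.add h2).congr (Eventually.of_forall fun x => ?_)
  simp; ring

lemma IsTestR.lForm_full {g : ℝ → ℝ} (H : IsTestR g) (a : ℝ → ℝ) (p : ℝ) :
    lForm a 0 p g = ∫ x, ((deriv g x)^2 + (((0:ℤ):ℝ)^2 - 1/4) * x⁻¹^2 * (g x)^2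
      + (a x + p)^2 * (g x)^2) := by
  unfold lForm
  apply setIntegral_eq_integral_of_forall_compl_eq_zero
  intro x hx
  rw [H.zero (not_lt.1 hx), H.zeroD (not_lt.1 hx)]; simp

lemma IsTestR.lForm_eq {g : ℝ → ℝ} (H : IsTestR g) (a : ℝ → ℝ) (p : ℝ)
    (hW : Integrable (fun x => (a x + p)^2 * (g x)^2)) :
    lForm a 0 p g = (∫ x, (deriv g x - x⁻¹ * g x / 2)^2) + ∫ x, (a x + p)^2 * (g x)^2 := by
  rw [H.lForm_full, integral_add H.int_hardy hW, H.hardy]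

lemma IsTestR.intW_of {g : ℝ → ℝ} (H : IsTestR g) (a : ℝ → ℝ) (p : ℝ)
    (hi : Integrable (fun x => (deriv g x)^2 + (((0:ℤ):ℝ)^2 - 1/4) * x⁻¹^2 * (g x)^2
      + (a x + p)^2 * (g x)^2)) : Integrable (fun x => (a x + p)^2 * (g x)^2) := by
  refine (hi.sub H.int_hardy).congr (Eventually.of_forall fun x => ?_)
  simp

lemma IsTestR.lForm_nonneg {g : ℝ → ℝ} (H : IsTestR g) (a : ℝ → ℝ) (p : ℝ) :
    0 ≤ lForm a 0 p g := by
  by_cases hi : Integrable (fun x => (deriv g x)^2 + (((0:ℤ):ℝ)^2 - 1/4) * x⁻¹^2 * (g x)^2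
      + (a x + p)^2 * (g x)^2)
  · rw [H.lForm_eq a p (H.intW_of a p hi)]
    exact add_nonneg (integral_nonneg fun x => sq_nonneg _)
      (integral_nonneg fun x => by simp only [Pi.zero_apply]; positivity)
  · rw [H.lForm_full, integral_undef hi]

lemma IsTestR.coerc {g : ℝ → ℝ} (H : IsTestR g) (a : ℝ → ℝ) (p : ℝ)
    (hW : Integrable (fun x => (a x + p)^2 * (g x)^2)) (δ M : ℝ) (hδ : 0 < δ) (hM : 0 < M)
    (E : Set ℝ) (hE : MeasurableSet E) (hvol : volume E ≤ ENNReal.ofReal δ)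
    (hEM : ∀ x > 0, x ∉ E → M ≤ (a x + p)^2) :
    ∫ x, (g x)^2 ≤ (4 * δ^2 + 2 / M) * lForm a 0 p g := by
  have i2 := int_sq H.tc.cont H.2.1
  rw [H.lForm_eq a p hW]
  have n1 : 0 ≤ ∫ x, (deriv g x - x⁻¹ * g x / 2)^2 := integral_nonneg fun x => sq_nonneg _
  have n2 : 0 ≤ ∫ x, (g x)^2 := integral_nonneg fun x => sq_nonneg _
  have n3 : 0 ≤ ∫ x, (a x + p)^2 * (g x)^2 :=
    integral_nonneg fun x => by simp only [Pi.zero_apply]; positivity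
  have hs := H.supb (1/(2*δ)) (by positivity)
  set Dn := ∫ x, (deriv g x - x⁻¹ * g x / 2)^2
  set N := ∫ x, (g x)^2 with hN
  set Wn := ∫ x, (a x + p)^2 * (g x)^2 with hWn
  have b1 : ∫ x in E, (g x)^2 ≤ δ * (Dn / (1/(2*δ)) + (1/(2*δ)) * N) := by
    have hfin : volume E < ⊤ := hvol.trans_lt ENNReal.ofReal_lt_top
    have c0 : 0 ≤ Dn / (1/(2*δ)) + (1/(2*δ)) * N := by positivity
    calc ∫ x in E, (g x)^2 ≤ ∫ x in E, (Dn / (1/(2*δ)) + (1/(2*δ)) * N) := by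
          refine setIntegral_mono_on i2.integrableOn (integrableOn_const hfin.ne) hE fun x _ => hs x
      _ = (volume E).toReal * (Dn / (1/(2*δ)) + (1/(2*δ)) * N) := by
          rw [setIntegral_const]; rfl
      _ ≤ _ := by
          refine mul_le_mul_of_nonneg_right ?_ c0
          exact ENNReal.toReal_le_of_le_ofReal hδ.le hvol
  have b2 : ∫ x in Eᶜ, (g x)^2 ≤ (1/M) * Wn := by
    calc ∫ x in Eᶜ, (g x)^2 ≤ ∫ x in Eᶜ, (1/M) * ((a x + p)^2 * (g x)^2) := by
          refine setIntegral_mono_on i2.integrableOn (hW.const_mul _).integrableOn hE.compl ?_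
          intro x hx
          rcases le_or_gt x 0 with h0 | h0
          · rw [H.zero h0]; simp
          · have := hEM x h0 hx
            rw [← mul_assoc]
            refine le_mul_of_one_le_left (sq_nonneg _) ?_
            rw [one_div, inv_mul_eq_div, one_le_div hM]; exact this
      _ ≤ ∫ x, (1/M) * ((a x + p)^2 * (g x)^2) :=
          setIntegral_le_integral (hW.const_mul _)
            (Eventually.of_forall fun x => by simp only [Pi.zero_apply]; positivity)
      _ = _ := integral_const_mul _ _
  have b3 := integral_add_compl hE i2
  rw [← hN] at b3
  have e : δ * (Dn / (1/(2*δ)) + (1/(2*δ)) * N) = 2 * δ^2 * Dn + N/2 := by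
    field_simp
  rw [e] at b1
  have e2 : (4 * δ^2 + 2/M) * (Dn + Wn) =
    2 * (2 * δ^2 * Dn + (1/M) * Wn) + (2 / M * Dn + 4 * δ^2 * Wn) := by ring
  rw [e2]
  have : 0 ≤ 2 / M * Dn + 4 * δ^2 * Wn := by positivity
  linarith

lemma isTestR_zero : IsTestR 0 := by
  refine ⟨contDiff_const, HasCompactSupport.zero, ?_⟩
  simp [tsupport]

lemma IsTestR.add {f g : ℝ → ℝ} (hf : IsTestR f) (hg : IsTestR g) : IsTestR (f + g) := by
  refine ⟨hf.1.add hg.1, hf.2.1.add hg.2.1, ?_⟩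
  exact (tsupport_add f g).trans (union_subset hf.2.2 hg.2.2)

lemma IsTestR.smul {g : ℝ → ℝ} (hg : IsTestR g) (c : ℝ) : IsTestR (c • g) :=
  hg.mulLeft (w := fun _ => c) fun _ _ => contDiffAt_const

lemma IsTestR.span {n : ℕ} {f : Fin n → (ℝ → ℝ)} (hf : ∀ i, IsTestR (f i)) {g : ℝ → ℝ}
    (hg : g ∈ Submodule.span ℝ (Set.range f)) : IsTestR g := by
  induction hg using Submodule.span_induction with
  | mem x h => obtain ⟨i, rfl⟩ := h; exact hf i
  | zero => exact isTestR_zero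
  | add x y _ _ hx hy => exact hx.add hy
  | smul c x _ hx => exact hx.smul c

lemma IsTestR.pos {g : ℝ → ℝ} (H : IsTestR g) (h0 : g ≠ 0) : 0 < ∫ x, (g x)^2 := by
  obtain ⟨x, hx⟩ := Function.ne_iff.1 h0
  have hc := H.tc.cont
  refine Continuous.integral_pos_of_hasCompactSupport_nonneg_nonzero (f := fun x => (g x)^2) (x := x)
    (by fun_prop) ?_ (fun x => sq_nonneg _) (pow_ne_zero 2 hx)
  have : HasCompactSupport (fun x => g x * g x) := H.2.1.mul_right
  simpa [pow_two] using this

/-- compactness of the sphere -/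
lemma gram_lower {n : ℕ} (G : Fin n → Fin n → ℝ)
    (hpos : ∀ c : Fin n → ℝ, c ≠ 0 → 0 < ∑ i, ∑ j, c i * c j * G i j) :
    ∃ κ > 0, ∀ c : Fin n → ℝ, κ * ∑ i, (c i)^2 ≤ ∑ i, ∑ j, c i * c j * G i j := by
  set S : Set (Fin n → ℝ) := {c | ∑ i, (c i)^2 = 1} with hS
  have hcl : IsClosed S := isClosed_eq (by fun_prop) continuous_const
  have hbd : S ⊆ Metric.closedBall 0 1 := by
    intro c hc
    rw [mem_closedBall_zero_iff, pi_norm_le_iff_of_nonneg zero_le_one]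
    intro i
    have h1 : (c i)^2 ≤ ∑ i, (c i)^2 :=
      Finset.single_le_sum (f := fun i => (c i)^2) (fun i _ => sq_nonneg _) (Finset.mem_univ i)
    have h2 : ∑ i, (c i)^2 = 1 := hc
    rw [Real.norm_eq_abs, ← sq_le_one_iff_abs_le_one]
    linarith
  have hcomp : IsCompact S := (isCompact_closedBall _ _).of_isClosed_subset hcl hbd
  have hz : ∀ c : Fin n → ℝ, c ≠ 0 → 0 < ∑ i, (c i)^2 := by
    intro c hc
    obtain ⟨i, hi⟩ := Function.ne_iff.1 hc
    exact Finset.sum_pos' (fun i _ => sq_nonneg _) ⟨i, Finset.mem_univ i, by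
      have : c i ≠ 0 := hi
      positivity⟩
  rcases S.eq_empty_or_nonempty with he | hne
  · refine ⟨1, one_pos, fun c => ?_⟩
    by_cases hc : c = 0
    · simp [hc]
    · exfalso
      have hp := hz c hc
      have : (fun i => c i / √(∑ i, (c i)^2)) ∈ S := by
        simp only [hS, mem_setOf_eq, div_pow, Real.sq_sqrt hp.le]
        rw [← Finset.sum_div, div_self hp.ne']
      rw [he] at this
      exact this
  · obtain ⟨c0, hc0, hmin⟩ := hcomp.exists_isMinOn hne
      (f := fun c => ∑ i, ∑ j, c i * c j * G i j) (by fun_prop)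
    have hc0' : c0 ≠ 0 := by
      rintro rfl
      simp [hS] at hc0
    refine ⟨_, hpos c0 hc0', fun c => ?_⟩
    by_cases hc : c = 0
    · simp [hc]
    · have hp := hz c hc
      set s := ∑ i, (c i)^2 with hs
      have : (fun i => c i / √s) ∈ S := by
        simp only [hS, mem_setOf_eq, div_pow, Real.sq_sqrt hp.le]
        rw [← Finset.sum_div, div_self hp.ne']
      have h1 := hmin this
      simp only [mem_setOf_eq] at h1
      have h2 : ∑ i, ∑ j, c i / √s * (c j / √s) * G i j = (∑ i, ∑ j, c i * c j * G i j) / s := by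
        rw [Finset.sum_div]
        refine Finset.sum_congr rfl fun i _ => ?_
        rw [Finset.sum_div]
        refine Finset.sum_congr rfl fun j _ => ?_
        have : √s * √s = s := Real.mul_self_sqrt hp.le
        rw [div_mul_div_comm, this]; ring
      rw [h2, le_div_iff₀ hp] at h1
      exact h1

lemma span_upper {n : ℕ} {f : Fin n → (ℝ → ℝ)} (hf : ∀ i, IsTestR (f i))
    (hl : LinearIndependent ℝ f) (a : ℝ → ℝ) (p : ℝ)
    (hW : ∀ g, IsTestR g → Integrable (fun x => (a x + p)^2 * (g x)^2)) :
    ∃ K, ∀ g ∈ Submodule.span ℝ (Set.range f), lForm a 0 p g ≤ K * ∫ x, (g x)^2 := by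
  have hint : ∀ i j, Integrable (fun x => f i x * f j x) := fun i j =>
    (hf i).tc.int (hf j).tc.cont
  have hmem : ∀ c : Fin n → ℝ, ∑ i, c i • f i ∈ Submodule.span ℝ (Set.range f) := fun c =>
    Submodule.mem_span_range_iff_exists_fun ℝ |>.2 ⟨c, rfl⟩
  have hN : ∀ c : Fin n → ℝ, ∫ x, ((∑ i, c i • f i) x)^2 =
      ∑ i, ∑ j, c i * c j * ∫ x, f i x * f j x := by
    intro c
    have : ∀ x, ((∑ i, c i • f i) x)^2 = ∑ i, ∑ j, c i * c j * (f i x * f j x) := by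
      intro x
      simp only [Finset.sum_apply, Pi.smul_apply, smul_eq_mul, pow_two, Finset.sum_mul_sum]
      refine Finset.sum_congr rfl fun i _ => Finset.sum_congr rfl fun j _ => by ring
    simp only [this]
    rw [integral_finsetSum]
    · refine Finset.sum_congr rfl fun i _ => ?_
      rw [integral_finsetSum]
      · refine Finset.sum_congr rfl fun j _ => integral_const_mul _ _
      · exact fun j _ => (hint i j).const_mul _
    · exact fun i _ => integrable_finsetSum _ fun j _ => (hint i j).const_mul _
  obtain ⟨κ, hκ, hk⟩ := gram_lower (fun i j => ∫ x, f i x * f j x) (by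
    intro c hc
    rw [← hN]
    refine (IsTestR.span hf (hmem c)).pos ?_
    intro h0
    exact hc (funext (Fintype.linearIndependent_iff.1 hl c h0)))
  refine ⟨(1/κ) * ∑ i, lForm a 0 p (f i), fun g hg => ?_⟩
  obtain ⟨c, rfl⟩ := Submodule.mem_span_range_iff_exists_fun ℝ |>.1 hg
  have Hg := IsTestR.span hf hg
  have hk' := hk c
  rw [← hN] at hk'
  have hL : 0 ≤ ∑ i, lForm a 0 p (f i) := Finset.sum_nonneg fun i _ => (hf i).lForm_nonneg a p
  have main : lForm a 0 p (∑ i, c i • f i) ≤ (∑ i, (c i)^2) * ∑ i, lForm a 0 p (f i) := by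
    rw [Hg.lForm_eq a p (hW _ Hg)]
    have e : ∑ i, lForm a 0 p (f i) = (∫ x, ∑ i, (deriv (f i) x - x⁻¹ * f i x / 2)^2)
        + ∫ x, ∑ i, (a x + p)^2 * (f i x)^2 := by
      rw [integral_finsetSum, integral_finsetSum, ← Finset.sum_add_distrib]
      · exact Finset.sum_congr rfl fun i _ => (hf i).lForm_eq a p (hW _ (hf i))
      · exact fun i _ => hW _ (hf i)
      · exact fun i _ => int_sq (hf i).h_cont (hf i).h_cs
    rw [e, mul_add, ← integral_const_mul, ← integral_const_mul]
    have hder : ∀ x, deriv (∑ i, c i • f i) x = ∑ i, c i * deriv (f i) x := by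
      intro x
      have := HasDerivAt.sum (u := Finset.univ) (A := fun i => c i • f i)
        (A' := fun i => c i * deriv (f i) x) (x := x) fun i _ => ((hf i).tc.hd x).const_smul (c i)
      exact this.deriv
    refine add_le_add (integral_mono (int_sq Hg.h_cont Hg.h_cs) ?_ fun x => ?_)
      (integral_mono (hW _ Hg) ?_ fun x => ?_)
    · exact (integrable_finsetSum _ fun i _ => int_sq (hf i).h_cont (hf i).h_cs).const_mul _
    · simp only
      have : deriv (∑ i, c i • f i) x - x⁻¹ * (∑ i, c i • f i) x / 2 =
          ∑ i, c i * (deriv (f i) x - x⁻¹ * f i x / 2) := by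
        rw [hder, Finset.sum_apply, Finset.mul_sum, Finset.sum_div, ← Finset.sum_sub_distrib]
        refine Finset.sum_congr rfl fun i _ => ?_
        simp; ring
      rw [this]
      exact Finset.sum_mul_sq_le_sq_mul_sq _ _ _
    · exact (integrable_finsetSum _ fun i _ => hW _ (hf i)).const_mul _
    · simp only
      have : (a x + p)^2 * ((∑ i, c i • f i) x)^2 = (∑ i, c i * ((a x + p) * f i x))^2 := by
        rw [Finset.sum_apply, ← mul_pow, Finset.mul_sum]
        congr 1
        refine Finset.sum_congr rfl fun i _ => ?_
        simp; ring
      rw [this]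
      refine (Finset.sum_mul_sq_le_sq_mul_sq _ _ _).trans_eq ?_
      simp only [mul_pow]
  refine main.trans ?_
  have h1 : ∑ i, (c i)^2 ≤ (1/κ) * ∫ x, ((∑ i, c i • f i) x)^2 := by
    rw [one_div, inv_mul_eq_div, le_div_iff₀ hκ]; linarith
  calc _ ≤ ((1/κ) * ∫ x, ((∑ i, c i • f i) x)^2) * ∑ i, lForm a 0 p (f i) := by gcongr
    _ = _ := by ring

lemma mu_nonneg (a : ℝ → ℝ) (n : ℕ) (p : ℝ) : 0 ∈ lowerBounds
    {S : ℝ | ∃ f : Fin n → (ℝ → ℝ), (∀ i, IsTestR (f i)) ∧ LinearIndependent ℝ f ∧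
    S = sSup {R : ℝ | ∃ g : ℝ → ℝ, g ∈ Submodule.span ℝ (Set.range f) ∧ g ≠ 0 ∧
      R = lForm a 0 p g / ∫ r in Set.Ioi (0:ℝ), (g r) ^ 2}} := by
  rintro S ⟨f, hf, hl, rfl⟩
  apply Real.sSup_nonneg
  rintro R ⟨g, hg, h0, rfl⟩
  have H := IsTestR.span hf hg
  exact div_nonneg (H.lForm_nonneg a p) (integral_nonneg fun x => sq_nonneg _)

lemma mu_le (a : ℝ → ℝ) (n : ℕ) (hn : 1 ≤ n) (p s : ℝ) (f : Fin n → (ℝ → ℝ))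
    (hf : ∀ i, IsTestR (f i)) (hl : LinearIndependent ℝ f)
    (hs : ∀ g ∈ Submodule.span ℝ (Set.range f), g ≠ 0 → lForm a 0 p g ≤ s * ∫ x, (g x)^2) :
    muRadial a 0 n p ≤ s := by
  refine (csInf_le ⟨0, mu_nonneg a n p⟩ ⟨f, hf, hl, rfl⟩).trans ?_
  apply csSup_le
  · exact ⟨_, f ⟨0, hn⟩, Submodule.subset_span ⟨_, rfl⟩, hl.ne_zero _, rfl⟩
  · rintro R ⟨g, hg, h0, rfl⟩
    have H := IsTestR.span hf hg
    rw [H.norm_eq, div_le_iff₀ (H.pos h0)]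
    exact hs g hg h0

open Polynomial in
/-- multiplication map -/
def TPoly (w : ℝ → ℝ) (r0 : ℝ) : ℝ[X] →ₗ[ℝ] (ℝ → ℝ) where
  toFun P := fun r => w r * P.eval (r - r0)
  map_add' P Q := by ext r; simp; ring
  map_smul' c P := by ext r; simp; ring

open Polynomial in
/-- family -/
def fam (w : ℝ → ℝ) (r0 : ℝ) (n : ℕ) (i : Fin n) : ℝ → ℝ := TPoly w r0 (monomial i 1)

open Polynomial in
lemma fam_li (w : ℝ → ℝ) (r0 : ℝ) (n : ℕ) (hw : {r | w r ≠ 0}.Infinite) :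
    LinearIndependent ℝ (fam w r0 n) := by
  have h1 : LinearIndependent ℝ (fun i : Fin n => (monomial (i:ℕ) (1:ℝ))) := by
    have := (Polynomial.basisMonomials ℝ).linearIndependent.comp (fun i : Fin n => (i:ℕ))
      Fin.val_injective
    rw [Polynomial.coe_basisMonomials] at this
    exact this
  refine h1.map' (TPoly w r0) ?_
  rw [LinearMap.ker_eq_bot']
  intro P hP
  refine Polynomial.eq_zero_of_infinite_isRoot P ?_
  refine ((hw.image (f := fun r => r - r0) (sub_left_injective.injOn))).mono ?_
  rintro _ ⟨r, hr, rfl⟩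
  have := congrFun hP r
  simp only [TPoly, LinearMap.coe_mk, AddHom.coe_mk, Pi.zero_apply, mul_eq_zero] at this
  exact this.resolve_left hr

open Polynomial in
lemma fam_span (w : ℝ → ℝ) (r0 : ℝ) (n : ℕ) (hn : 1 ≤ n) (g : ℝ → ℝ)
    (hg : g ∈ Submodule.span ℝ (Set.range (fam w r0 n))) :
    ∃ P : ℝ[X], P.natDegree ≤ n - 1 ∧ g = fun r => w r * P.eval (r - r0) := by
  obtain ⟨c, rfl⟩ := Submodule.mem_span_range_iff_exists_fun ℝ |>.1 hg
  refine ⟨∑ i : Fin n, c i • monomial (i:ℕ) (1:ℝ), ?_, ?_⟩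
  · apply natDegree_sum_le_of_forall_le
    intro i _
    refine (natDegree_smul_le _ _).trans ((natDegree_monomial_le _).trans ?_)
    have := i.2
    omega
  · have : TPoly w r0 (∑ i : Fin n, c i • monomial (i:ℕ) (1:ℝ)) = ∑ i, c i • fam w r0 n i := by
      rw [map_sum]
      simp only [map_smul]; rfl
    rw [← this]; rfl

open Polynomial in
lemma fam_test (w : ℝ → ℝ) (hw : IsTestR w) (r0 : ℝ) (n : ℕ) (i : Fin n) :
    IsTestR (fam w r0 n i) := by
  have := hw.mulLeft (w := fun r => (r - r0)^(i:ℕ)) fun x _ => by fun_prop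
  convert this using 1
  ext r
  simp [fam, TPoly, mul_comm]

lemma exists_bump (α β : ℝ) (hα : 0 < α) (hαβ : α ≤ β) :
    ∃ w, IsTestR w ∧ ∀ x ∈ Icc α β, w x ≠ 0 := by
  let f : ContDiffBump ((α+β)/2) := ⟨(β-α)/2 + α/4, (β-α)/2 + α/2, by linarith, by linarith⟩
  refine ⟨f, ⟨f.contDiff, f.hasCompactSupport, ?_⟩, fun x hx => ?_⟩
  · rw [f.tsupport_eq]
    intro x hx
    rw [Metric.mem_closedBall, Real.dist_eq] at hx
    have := (abs_le.1 hx).1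
    simp only [mem_Ioi]
    simp only [f] at this
    linarith
  · rw [f.one_of_mem_closedBall]
    · exact one_ne_zero
    · rw [Metric.mem_closedBall, Real.dist_eq, abs_le]
      simp only [f]
      constructor <;> linarith [hx.1, hx.2]

lemma exists_family (n : ℕ) : ∃ f : Fin n → (ℝ → ℝ), (∀ i, IsTestR (f i)) ∧ LinearIndependent ℝ f := by
  obtain ⟨w, hw, h⟩ := exists_bump 1 2 one_pos (by norm_num)
  exact ⟨fam w 0 n, fam_test w hw 0 n, fam_li w 0 n ((Icc_infinite (by norm_num)).mono h)⟩

lemma mu_ge (a : ℝ → ℝ) (n : ℕ) (p s : ℝ)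
    (hW : ∀ g, IsTestR g → Integrable (fun x => (a x + p)^2 * (g x)^2))
    (hs : ∀ f : Fin n → (ℝ → ℝ), (∀ i, IsTestR (f i)) → LinearIndependent ℝ f →
      ∃ g ∈ Submodule.span ℝ (Set.range f), g ≠ 0 ∧ s * (∫ x, (g x)^2) ≤ lForm a 0 p g) :
    s ≤ muRadial a 0 n p := by
  apply le_csInf
  · obtain ⟨f, hf, hl⟩ := exists_family n
    exact ⟨_, f, hf, hl, rfl⟩
  · rintro S ⟨f, hf, hl, rfl⟩
    obtain ⟨g, hg, h0, hle⟩ := hs f hf hl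
    have H := IsTestR.span hf hg
    have : s ≤ lForm a 0 p g / ∫ r in Set.Ioi (0:ℝ), (g r) ^ 2 := by
      rw [H.norm_eq, le_div_iff₀ (H.pos h0)]; exact hle
    refine this.trans (le_csSup ?_ ⟨g, hg, h0, rfl⟩)
    obtain ⟨K, hK⟩ := span_upper hf hl a p hW
    refine ⟨K, ?_⟩
    rintro R ⟨g, hg, h0, rfl⟩
    have H := IsTestR.span hf hg
    rw [H.norm_eq, div_le_iff₀ (H.pos h0)]
    exact hK g hg

lemma mu_ge' (a : ℝ → ℝ) (n : ℕ) (hn : 1 ≤ n) (p s : ℝ)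
    (hW : ∀ g, IsTestR g → Integrable (fun x => (a x + p)^2 * (g x)^2))
    (hs : ∀ g, IsTestR g → s * (∫ x, (g x)^2) ≤ lForm a 0 p g) :
    s ≤ muRadial a 0 n p := by
  refine mu_ge a n p s hW fun f hf hl => ?_
  exact ⟨f ⟨0, hn⟩, Submodule.subset_span ⟨_, rfl⟩, hl.ne_zero _, hs _ (hf _)⟩

lemma intW_core {g : ℝ → ℝ} (H : IsTestR g) (W : ℝ → ℝ)
    (hW : ∀ ε > 0, ∀ R, IntegrableOn W (Icc ε R)) : Integrable (fun x => W x * (g x)^2) := by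
  obtain ⟨ε, hε, R, -, hs⟩ := H.intRange
  have hg := H.tc.cont
  rw [← integrableOn_iff_integrable_of_support_subset (s := Icc ε R)]
  · exact (hW ε hε R).mul_continuousOn (by fun_prop) isCompact_Icc
  · intro x hx
    refine hs x fun h => hx ?_
    simp [h]

lemma a2_int (a : ℝ → ℝ) (ha : ∀ R > (0:ℝ), IntegrableOn (fun r => (a r) ^ 2 * r) (Set.Ioc 0 R))
    (ε : ℝ) (hε : 0 < ε) (R : ℝ) : IntegrableOn (fun r => (a r)^2) (Icc ε R) := by
  have h1 : IntegrableOn (fun r => (a r) ^ 2 * r) (Icc ε R) := by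
    refine (ha (|R| + 1) (by positivity)).mono_set ?_
    intro x hx
    exact ⟨hε.trans_le hx.1, hx.2.trans ((le_abs_self R).trans (by linarith))⟩
  have h2 := h1.mul_continuousOn (g' := fun r => r⁻¹)
    (ContinuousOn.inv₀ continuousOn_id fun x hx => (hε.trans_le hx.1).ne') isCompact_Icc
  refine h2.congr_fun (fun x hx => ?_) measurableSet_Icc
  have : x ≠ 0 := (hε.trans_le hx.1).ne'
  simp only
  field_simp

lemma intW_meas (a : ℝ → ℝ)
    (ha : ∀ R > (0:ℝ), IntegrableOn (fun r => (a r) ^ 2 * r) (Set.Ioc 0 R))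
    (hm : AEStronglyMeasurable a (volume.restrict (Ioi 0))) (p : ℝ) (g : ℝ → ℝ) (H : IsTestR g) :
    Integrable (fun x => (a x + p)^2 * (g x)^2) := by
  refine intW_core H _ fun ε hε R => ?_
  have h2 := a2_int a ha ε hε R
  have hsub : Icc ε R ⊆ Ioi 0 := fun x hx => hε.trans_le hx.1
  have hc : ∀ c : ℝ, IntegrableOn (fun _ => c) (Icc ε R) := fun c =>
    integrableOn_const (by simp)
  have h1 : IntegrableOn a (Icc ε R) := by
    refine Integrable.mono' ((hc 1).add h2) (hm.mono_measure (Measure.restrict_mono hsub le_rfl))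
      (Eventually.of_forall fun x => ?_)
    simp only [Real.norm_eq_abs, Pi.add_apply]
    rw [abs_le]; constructor <;> nlinarith [sq_nonneg (a x - 1), sq_nonneg (a x + 1)]
  have := (h2.add (h1.const_mul (2*p))).add (hc (p^2))
  refine Integrable.congr this (Eventually.of_forall fun x => ?_)
  simp; ring

lemma a_linear (b₀ : ℝ) (a : ℝ → ℝ) (r₁ : ℝ) (h : ∀ r ≥ r₁, HasDerivAt a b₀ r) :
    ∃ c, ∀ r ≥ r₁, a r = b₀ * r + c := by
  refine ⟨a r₁ - b₀ * r₁, fun r hr => ?_⟩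
  have hd : ∀ x ≥ r₁, HasDerivAt (fun r => a r - b₀ * r) 0 x := fun x hx => by
    refine ((h x hx).sub ((hasDerivAt_id x).const_mul b₀)).congr_deriv ?_
    simp
  have := constant_of_has_deriv_right_zero (f := fun r => a r - b₀ * r) (a := r₁) (b := r)
    (fun x hx => (hd x hx.1).continuousAt.continuousWithinAt)
    (fun x hx => (hd x hx.1).hasDerivWithinAt) r ⟨hr, le_rfl⟩
  linarith

lemma mu_tendsto (b₀ : ℝ) (hb₀ : 0 < b₀) (a : ℝ → ℝ)
    (ha : ∀ R > (0:ℝ), IntegrableOn (fun r => (a r) ^ 2 * r) (Set.Ioc 0 R))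
    (r₁ c : ℝ) (hlin : ∀ r ≥ r₁, a r = b₀ * r + c)
    (hm : AEStronglyMeasurable a (volume.restrict (Ioi 0))) (n : ℕ) (hn : 1 ≤ n) (T : ℝ)
    (hT : 0 < T) (q : ℝ) : ∃ p > q, T ≤ muRadial a 0 n p := by
  set M := 4 * T with hM
  set R0 := max r₁ (|c| / b₀) with hR0
  have hpos : ∀ r ≥ R0, 0 ≤ a r := by
    intro r hr
    rw [hlin r ((le_max_left _ _).trans hr)]
    have h1 : |c| / b₀ ≤ r := (le_max_right _ _).trans hr
    rw [div_le_iff₀ hb₀] at h1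
    have := neg_abs_le c
    linarith
  obtain ⟨δ, hδ, hδ2⟩ : ∃ δ > 0, 4 * δ^2 ≤ 1 / (2 * T) := by
    refine ⟨√(1/(8*T)), by positivity, ?_⟩
    rw [Real.sq_sqrt (by positivity)]
    apply le_of_eq; field_simp; norm_num
  set ν := volume.restrict (Ioo 0 R0) with hν
  set t : ℕ → Set ℝ := fun k => {r | a r < -(k:ℝ) + √M} with ht
  have hmν : AEMeasurable a ν :=
    (hm.mono_measure (Measure.restrict_mono (fun x hx => hx.1) le_rfl)).aemeasurable
  have hlim := tendsto_measure_iInter_atTop (μ := ν) (s := t)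
    (fun k => nullMeasurableSet_lt hmν aemeasurable_const)
    (fun i j hij x hx => by
      simp only [ht, mem_setOf_eq] at hx ⊢
      have : (i:ℝ) ≤ j := by exact_mod_cast hij
      linarith)
    ⟨0, measure_ne_top _ _⟩
  have hempty : ⋂ k, t k = ∅ := by
    rw [eq_empty_iff_forall_notMem]
    intro x hx
    obtain ⟨k, hk⟩ := exists_nat_gt (√M - a x)
    have := mem_iInter.1 hx k
    simp only [ht, mem_setOf_eq] at this
    linarith
  rw [hempty, measure_empty] at hlim
  have ev1 := hlim.eventually (eventually_le_nhds (show (0:ENNReal) < ENNReal.ofReal δ by simpa using hδ))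
  have ev2 : ∀ᶠ k : ℕ in atTop, max q (√M) < k :=
    (tendsto_natCast_atTop_atTop (R := ℝ)).eventually (eventually_gt_atTop _)
  obtain ⟨k, hk1, hk2⟩ := (ev1.and ev2).exists
  refine ⟨k, (le_max_left _ _).trans_lt hk2, ?_⟩
  have hkM : √M < k := (le_max_right _ _).trans_lt hk2
  refine mu_ge' a n hn k T (intW_meas a ha hm k) fun g H => ?_
  simp only [hν, Function.comp_apply] at hk1
  rw [Measure.restrict_apply' measurableSet_Ioo, ← measure_toMeasurable] at hk1
  have := H.coerc a k (intW_meas a ha hm k g H) δ M hδ (by positivity) _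
    (measurableSet_toMeasurable _ _) hk1 (by
      intro x hx hxE
      have hsq : √M ≤ a x + k := by
        by_contra hcon
        push Not at hcon
        rcases lt_or_ge x R0 with h | h
        · exact hxE (subset_toMeasurable _ _ ⟨by simp only [ht, mem_setOf_eq]; linarith, hx, h⟩)
        · linarith [hpos x h]
      calc M = √M^2 := (Real.sq_sqrt (by positivity)).symm
        _ ≤ _ := by gcongr)
  have hl := H.lForm_nonneg a k
  have h1 : (4 * δ^2 + 2/M) ≤ 1/T := by
    have : 2 / M = 1/(2*T) := by rw [hM]; field_simp; norm_num
    rw [this]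
    have : 1/T = 1/(2*T) + 1/(2*T) := by field_simp; norm_num
    linarith
  calc T * ∫ x, (g x)^2 ≤ T * ((4 * δ^2 + 2/M) * lForm a 0 k g) := by gcongr
    _ ≤ T * (1/T * lForm a 0 k g) := by gcongr
    _ = _ := by field_simp

lemma mu_upper (b₀ : ℝ) (hb₀ : 0 < b₀) (a : ℝ → ℝ)
    (ha : ∀ R > (0:ℝ), IntegrableOn (fun r => (a r) ^ 2 * r) (Set.Ioc 0 R))
    (r₁ c : ℝ) (hlin : ∀ r ≥ r₁, a r = b₀ * r + c)
    (hm : AEStronglyMeasurable a (volume.restrict (Ioi 0))) (n : ℕ) (hn : 1 ≤ n) :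
    ∃ p ≤ 0, muRadial a 0 n p < (2 * (n-1 : ℕ) + 1) * b₀ := by
  obtain ⟨χ, C1, hs, h1, h2, h3, h4, hC, h5, h6⟩ := exists_cutoff
  obtain ⟨C, hCp, hC⟩ := trial_bound b₀ hb₀ (n-1) χ C1 hs h1 h2 h3 h4 hC h5 h6
  obtain ⟨R, hR1, hRr, hRc, hRC⟩ : ∃ R : ℝ, 1 ≤ R ∧ r₁ ≤ R ∧ |c| / b₀ ≤ R ∧ 288 * C + 1 ≤ R := by
    refine ⟨1 + |r₁| + |c|/b₀ + (288 * C + 1), ?_, ?_, ?_, ?_⟩ <;>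
    · have := le_abs_self r₁
      have : 0 ≤ |r₁| := abs_nonneg _
      have : 0 ≤ |c| / b₀ := by positivity
      linarith
  have hR0 : 0 < R := by linarith
  set r0 := 4 * R with hr0
  set p := - c - r0 * b₀ with hp
  set w : ℝ → ℝ := fun r => χ ((r-r0)/R) * Real.exp (-b₀ * (r-r0)^2/2) with hw
  have hwz : ∀ r, w r ≠ 0 → r ∈ Icc (2*R) (6*R) := by
    intro r hr
    by_contra hcon
    apply hr
    have : 2 ≤ |(r-r0)/R| := by
      rw [abs_div, abs_of_pos hR0, le_div_iff₀ hR0, le_abs]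
      by_contra h
      push Not at h
      exact hcon ⟨by linarith, by linarith⟩
    simp only [hw, h2 _ this, zero_mul]
  have hwt : IsTestR w := by
    have hsub : tsupport w ⊆ Icc (2*R) (6*R) := closure_minimal hwz isClosed_Icc
    refine ⟨by fun_prop, HasCompactSupport.intro isCompact_Icc (K := Icc (2*R) (6*R)) ?_, ?_⟩
    · intro x hx
      by_contra h
      exact hx (hwz x h)
    · intro x hx
      have := (hsub hx).1
      simp only [mem_Ioi]; linarith
  have hwinf : {r | w r ≠ 0}.Infinite := by
    refine (Icc_infinite (a := r0) (b := r0 + R) (by linarith)).mono fun x hx => ?_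
    have : |(x - r0)/R| ≤ 1 := by
      rw [abs_div, abs_of_pos hR0, div_le_one hR0, abs_le]
      constructor <;> linarith [hx.1, hx.2]
    simp only [hw, mem_setOf_eq, h1 _ this, one_mul]
    exact (Real.exp_pos _).ne'
  set E : ℝ := (2 * (n-1 : ℕ) + 1) * b₀ with hE
  have hlt : E + 2 * (C/R^4) - 1/(144*R^2) < E := by
    have : 2 * (C/R^4) < 1/(144*R^2) := by
      rw [← mul_div_assoc, div_lt_div_iff₀ (by positivity) (by positivity)]
      have : 288 * C < R^2 := by nlinarith
      have := mul_lt_mul_of_pos_right this (show 0 < R^2 by positivity)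
      nlinarith
    linarith
  refine ⟨p, ?_, lt_of_le_of_lt (mu_le a n hn p (E + 2 * (C/R^4) - 1/(144*R^2)) (fam w r0 n)
    (fam_test w hwt r0 n) (fam_li w r0 n hwinf) ?_) hlt⟩
  · rw [div_le_iff₀ hb₀] at hRc
    have := neg_abs_le c
    have : 0 ≤ R * b₀ := by positivity
    rw [hp, hr0]; linarith
  intro g hg h0
  have Hg := IsTestR.span (fam_test w hwt r0 n) hg
  obtain ⟨P, hPd, hgP⟩ := fam_span w r0 n hn g hg
  obtain ⟨H, B1, B2⟩ := hC R hR1 P hPd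
  set h := trialF χ b₀ R P with hh
  have hgh : g = fun r => h (r - r0) := by
    rw [hgP]; rfl
  have hdg : ∀ r, deriv g r = deriv h (r - r0) := by
    intro r; rw [hgh, deriv_comp_sub_const]
  have hgn : ∫ x, (g x)^2 = ∫ x, (h x)^2 := by
    rw [hgh]; exact integral_sub_right_eq_self (fun x => (h x)^2) r0
  have hhc := H.cont
  have i1 : Integrable (fun x => (deriv h x)^2 + b₀^2 * (x-0)^2 * (h x)^2) := by
    have := (int_sq H.contD H.2.deriv).add
      (H.int (w := fun x => b₀^2 * (x-0)^2 * h x) (by fun_prop))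
    refine this.congr (Eventually.of_forall fun x => ?_)
    simp; ring
  have i2 : Integrable (fun x => (h x)^2) := int_sq H.cont H.2
  have i3 : Integrable (fun x => ((deriv h x)^2 + b₀^2 * (x-0)^2 * (h x)^2)
      - 1/(144*R^2) * (h x)^2) := i1.sub (i2.const_mul _)
  have hW := intW_meas a ha hm p g Hg
  have main : lForm a 0 p g ≤ ∫ x, (((deriv h x)^2 + b₀^2 * (x-0)^2 * (h x)^2)
      - 1/(144*R^2) * (h x)^2) := by
    rw [Hg.lForm_full, ← integral_sub_right_eq_self (fun x => ((deriv h x)^2 + b₀^2 * (x-0)^2 * (h x)^2)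
      - 1/(144*R^2) * (h x)^2) r0]
    refine integral_mono (Hg.int_hardy.add hW) (i3.comp_sub_right r0) fun r => ?_
    simp only [sub_zero]
    rw [hdg r]
    have e : h (r - r0) = g r := by rw [hgh]
    rw [e]
    by_cases hgr : g r = 0
    · rw [hgr]; simp
    · have hr : r ∈ Icc (2*R) (6*R) := by
        apply hwz
        intro h
        apply hgr
        rw [hgP]; simp [h]
      have hr0' : 0 < r := by linarith [hr.1]
      have ea : a r + p = b₀ * (r - r0) := by
        rw [hlin r (by linarith [hr.1]), hp]; ring
      have er : 1/(144*R^2) ≤ (1/4) * r⁻¹^2 := by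
        rw [inv_pow, ← div_eq_mul_inv, div_div, div_le_div_iff₀ (by positivity) (by positivity)]
        have : r^2 ≤ (6*R)^2 := by
          have := hr.2
          gcongr
        nlinarith
      rw [ea]
      have := mul_le_mul_of_nonneg_right er (sq_nonneg (g r))
      have e3 : (((0:ℤ):ℝ)^2 - 1/4) * r⁻¹^2 * (g r)^2 = - (1/4 * r⁻¹^2 * (g r)^2) := by
        simp
      rw [e3, mul_pow]
      linarith
  rw [integral_sub i1 (i2.const_mul _), integral_const_mul] at main
  rw [hgn]
  have hGI : C/R^4 ≤ 1/2 := by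
    rw [div_le_div_iff₀ (by positivity) (by positivity)]
    have : R ≤ R^4 := le_self_pow₀ hR1 (by norm_num)
    linarith
  have hN := GI_sq b₀ P
  have B2' : GI b₀ (P^2) ≤ 2 * ∫ x, (h x)^2 := by nlinarith
  have B3 : C/R^4 * GI b₀ (P^2) ≤ C/R^4 * (2 * ∫ x, (h x)^2) := by gcongr
  linarith

lemma exists_moment {n : ℕ} (hn : 1 ≤ n) (f : Fin n → (ℝ → ℝ)) (hf : ∀ i, IsTestR (f i))
    (hl : LinearIndependent ℝ f) (ψ : Fin (n-1) → ℝ → ℝ) (hψ : ∀ j, Continuous (ψ j)) :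
    ∃ g ∈ Submodule.span ℝ (Set.range f), g ≠ 0 ∧ ∀ j, ∫ x, g x * ψ j x = 0 := by
  let L : (Fin n → ℝ) →ₗ[ℝ] (Fin (n-1) → ℝ) :=
    { toFun := fun c j => ∑ i, c i * ∫ x, f i x * ψ j x
      map_add' := fun c d => by
        ext j; simp [add_mul, Finset.sum_add_distrib]
      map_smul' := fun t c => by
        ext j; simp [Finset.mul_sum, mul_assoc] }
  have hk : LinearMap.ker L ≠ ⊥ := by
    apply LinearMap.ker_ne_bot_of_finrank_lt
    simp; omega
  obtain ⟨c, hc, hc0⟩ := Submodule.exists_mem_ne_zero_of_ne_bot hk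
  refine ⟨∑ i, c i • f i, Submodule.mem_span_range_iff_exists_fun ℝ |>.2 ⟨c, rfl⟩, ?_, ?_⟩
  · intro h0
    apply hc0
    ext i
    exact Fintype.linearIndependent_iff.1 hl c h0 i
  · intro j
    have h := congrFun (LinearMap.mem_ker.1 hc) j
    simp only [L, LinearMap.coe_mk, AddHom.coe_mk, Pi.zero_apply] at h
    rw [← h]
    simp only [Finset.sum_apply, Pi.smul_apply, smul_eq_mul, Finset.sum_mul, mul_assoc]
    rw [integral_finsetSum _ fun i _ => ((hf i).tc.int (hψ j)).const_mul (c i)]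
    simp only [integral_const_mul]

lemma IsTestR.int_full {g : ℝ → ℝ} (H : IsTestR g) (a : ℝ → ℝ) (p : ℝ)
    (hW : Integrable (fun x => (a x + p)^2 * (g x)^2)) :
    Integrable (fun x => (deriv g x)^2 + (((0:ℤ):ℝ)^2 - 1/4) * x⁻¹^2 * (g x)^2
      + (a x + p)^2 * (g x)^2) := H.int_hardy.add hW

lemma ims (a : ℝ → ℝ) (p : ℝ) (hW : ∀ g, IsTestR g → Integrable (fun x => (a x + p)^2 * (g x)^2))
    (θ : ℝ → ℝ) (hθ : ContDiff ℝ (⊤ : ℕ∞) θ) (κ : ℝ) (hκ : ∀ x, (deriv θ x)^2 ≤ κ)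
    (g : ℝ → ℝ) (H : IsTestR g) (H1 : IsTestR (fun x => Real.cos (θ x) * g x))
    (H2 : IsTestR (fun x => Real.sin (θ x) * g x)) :
    lForm a 0 p (fun x => Real.cos (θ x) * g x) + lForm a 0 p (fun x => Real.sin (θ x) * g x)
      ≤ lForm a 0 p g + κ * ∫ x, (g x)^2 := by
  rw [H1.lForm_full, H2.lForm_full, H.lForm_full, ← integral_const_mul,
    ← integral_add (H1.int_full a p (hW _ H1)) (H2.int_full a p (hW _ H2)),
    ← integral_add (H.int_full a p (hW _ H)) ((int_sq H.tc.cont H.2.1).const_mul κ)]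
  refine integral_mono ((H1.int_full a p (hW _ H1)).add (H2.int_full a p (hW _ H2)))
    ((H.int_full a p (hW _ H)).add ((int_sq H.tc.cont H.2.1).const_mul κ)) fun x => ?_
  have hd : HasDerivAt θ (deriv θ x) x := (hθ.differentiable (by simp) x).hasDerivAt
  have e1 : deriv (fun x => Real.cos (θ x) * g x) x =
    -Real.sin (θ x) * deriv θ x * g x + Real.cos (θ x) * deriv g x := (hd.cos.mul (H.tc.hd x)).deriv
  have e2 : deriv (fun x => Real.sin (θ x) * g x) x =
    Real.cos (θ x) * deriv θ x * g x + Real.sin (θ x) * deriv g x := (hd.sin.mul (H.tc.hd x)).deriv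
  simp only
  rw [e1, e2]
  have hsc := Real.sin_sq_add_cos_sq (θ x)
  have hk := mul_le_mul_of_nonneg_right (hκ x) (sq_nonneg (g x))
  generalize Real.sin (θ x) = s at *
  generalize Real.cos (θ x) = c at *
  generalize deriv θ x = t at *
  generalize g x = u at *
  generalize deriv g x = v at *
  generalize (((0:ℤ):ℝ)^2 - 1/4) * x⁻¹^2 = k at *
  generalize (a x + p)^2 = W at *
  have : (-s * t * u + c * v) ^ 2 + k * (c * u) ^ 2 + W * (c * u) ^ 2 +
      ((c * t * u + s * v) ^ 2 + k * (s * u) ^ 2 + W * (s * u) ^ 2) =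
      (s^2+c^2) * (t^2*u^2 + v^2 + k*u^2 + W*u^2) := by ring
  rw [this, hsc]
  linarith

lemma mu_lower (b₀ : ℝ) (hb₀ : 0 < b₀) (a : ℝ → ℝ)
    (ha : ∀ R > (0:ℝ), IntegrableOn (fun r => (a r) ^ 2 * r) (Set.Ioc 0 R))
    (habd : ∀ R > (0:ℝ), ∃ C : ℝ, ∀ r ∈ Set.Icc (0:ℝ) R, a r ≤ C)
    (r₁ c : ℝ) (hlin : ∀ r ≥ r₁, a r = b₀ * r + c)
    (hm : AEStronglyMeasurable a (volume.restrict (Ioi 0))) (n : ℕ) (hn : 1 ≤ n)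
    (η : ℝ) (hη : 0 < η) :
    ∃ P0, ∀ p ≤ P0, (2 * (n-1 : ℕ) + 1) * b₀ - η ≤ muRadial a 0 n p := by
  obtain ⟨χ, C1, hs, h1, h2, h3, h4, hC, h5, h6⟩ := exists_cutoff
  set K := 1/4 + (Real.pi/2*C1)^2 with hK
  have hKp : 0 < K := by positivity
  obtain ⟨ρ, hρ1, hρr, hρη⟩ : ∃ ρ : ℝ, 1 ≤ ρ ∧ r₁ ≤ ρ ∧ K / ρ^2 ≤ η := by
    have hq : 0 ≤ K / η := by positivity
    refine ⟨1 + |r₁| + K/η, by linarith [abs_nonneg r₁], by linarith [le_abs_self r₁], ?_⟩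
    have : (1:ℝ) ≤ 1 + |r₁| + K/η := by linarith [abs_nonneg r₁]
    rw [div_le_iff₀ (by positivity)]
    calc K = η * (K/η) := by field_simp
      _ ≤ η * (1 + |r₁| + K/η)^2 := by
          gcongr
          nlinarith [abs_nonneg r₁]
  have hρ : 0 < ρ := by linarith
  set θ : ℝ → ℝ := fun r => Real.pi/2 * (1 - χ (r/ρ)) with hθdef
  have hθ : ContDiff ℝ (⊤ : ℕ∞) θ := by
    have : ContDiff ℝ (⊤ : ℕ∞) (fun r => χ (r/ρ)) := hs.comp (by fun_prop)
    fun_prop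
  have hθd : ∀ x, (deriv θ x)^2 ≤ (Real.pi/2*C1)^2/ρ^2 := by
    intro x
    have hd : HasDerivAt (fun r => χ (r/ρ)) (deriv χ (x/ρ) * (1/ρ)) x :=
      HasDerivAt.comp x (hs.differentiable (by simp) (x/ρ)).hasDerivAt ((hasDerivAt_id x).div_const ρ)
    have hd2 : HasDerivAt θ (Real.pi/2 * (0 - deriv χ (x/ρ) * (1/ρ))) x :=
      (((hasDerivAt_const x (1:ℝ)).sub hd).const_mul _)
    rw [hd2.deriv, show (Real.pi/2 * (0 - deriv χ (x/ρ) * (1/ρ)))^2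
      = (Real.pi/2)^2 * (deriv χ (x/ρ))^2 / ρ^2 by field_simp; ring, mul_pow]
    gcongr ?_ * ?_ / _
    exact sq_le_sq' (abs_le.1 (h5 _)).1 (abs_le.1 (h5 _)).2
  have hθ0 : ∀ x, 0 < x → x ≤ ρ → θ x = 0 := by
    intro x hx hx2
    simp only [hθdef]
    rw [h1 _ (by rw [abs_of_pos (by positivity)]; rw [div_le_one hρ]; exact hx2)]; simp
  have hθ1 : ∀ x, 2*ρ ≤ x → θ x = Real.pi/2 := by
    intro x hx
    have : 0 < x := by linarith
    simp only [hθdef]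
    rw [h2 _ (by rw [abs_of_pos (by positivity), le_div_iff₀ hρ]; exact hx)]; simp
  set E := (2 * (n-1 : ℕ) + 1) * b₀ with hE
  have hEp : 0 ≤ E := by positivity
  obtain ⟨Cb, hCb⟩ := habd (2*ρ) (by positivity)
  refine ⟨-Cb - √E, fun p hp => ?_⟩
  have hW := fun g H => intW_meas a ha hm p g H
  have hEW : ∀ x, 0 < x → x ≤ 2*ρ → E ≤ (a x + p)^2 := by
    intro x hx hx2
    have := hCb x ⟨hx.le, hx2⟩
    have h0 := Real.sqrt_nonneg E
    nlinarith [Real.sq_sqrt hEp]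
  set r0 := -(c+p)/b₀ with hr0
  have hap : ∀ x, ρ ≤ x → a x + p = b₀ * (x - r0) := by
    intro x hx
    rw [hlin x (hρr.trans hx), hr0]; field_simp; ring
  refine mu_ge a n p _ hW fun f hf hl => ?_
  obtain ⟨g, hg, hg0, hmom⟩ := exists_moment hn f hf hl
    (fun j x => Real.sin (θ x) * ((x-r0)^(j:ℕ) * Real.exp (-b₀ * (x-r0)^2/2)))
    (fun j => by have := hθ.continuous; fun_prop)
  refine ⟨g, hg, hg0, ?_⟩
  have H := IsTestR.span hf hg
  have H1 : IsTestR (fun x => Real.cos (θ x) * g x) :=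
    H.mulLeft (w := fun x => Real.cos (θ x)) fun x _ => (Real.contDiff_cos.comp hθ).contDiffAt
  have H2 : IsTestR (fun x => Real.sin (θ x) * g x) :=
    H.mulLeft (w := fun x => Real.sin (θ x)) fun x _ => (Real.contDiff_sin.comp hθ).contDiffAt
  have hims := ims a p hW θ hθ _ hθd g H H1 H2
  have hN : (∫ x, (Real.cos (θ x) * g x)^2) + ∫ x, (Real.sin (θ x) * g x)^2 = ∫ x, (g x)^2 := by
    rw [← integral_add (int_sq H1.tc.cont H1.2.1) (int_sq H2.tc.cont H2.2.1)]
    congr 1; ext x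
    linear_combination (g x)^2 * Real.sin_sq_add_cos_sq (θ x)
  have L1 : E * ∫ x, (Real.cos (θ x) * g x)^2 ≤ lForm a 0 p (fun x => Real.cos (θ x) * g x) := by
    rw [H1.lForm_eq a p (hW _ H1), ← integral_const_mul]
    have n1 : 0 ≤ ∫ x, (deriv (fun x => Real.cos (θ x) * g x) x
      - x⁻¹ * (Real.cos (θ x) * g x) / 2)^2 := integral_nonneg fun x => sq_nonneg _
    refine le_trans ?_ (le_add_of_nonneg_left n1)
    refine integral_mono ((int_sq H1.tc.cont H1.2.1).const_mul E) (hW _ H1) fun x => ?_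
    simp only
    rcases le_or_gt x 0 with hx | hx
    · rw [H.zero hx]; simp
    rcases le_or_gt x (2*ρ) with hx2 | hx2
    · exact mul_le_mul_of_nonneg_right (hEW x hx hx2) (sq_nonneg _)
    · rw [hθ1 x hx2.le]; simp
  have L2 : E * (∫ x, (Real.sin (θ x) * g x)^2) - (1/4/ρ^2) * ∫ x, (Real.sin (θ x) * g x)^2
      ≤ lForm a 0 p (fun x => Real.sin (θ x) * g x) := by
    have hlow := ho_lower b₀ r0 hb₀ (n-1) _ H2.tc (fun j hj => by
      rw [← hmom ⟨j, hj⟩]; congr 1; ext x; ring)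
    refine (sub_le_sub_right hlow _).trans ?_
    have i1 : Integrable (fun x => (deriv (fun x => Real.sin (θ x) * g x) x)^2
      + b₀^2 * (x-r0)^2 * (Real.sin (θ x) * g x)^2) := by
      refine (int_sq H2.tc.contD H2.2.1.deriv).add ?_
      refine (H2.tc.int (w := fun x => b₀^2 * (x-r0)^2 * (Real.sin (θ x) * g x)) ?_).congr
        (Eventually.of_forall fun x => by simp only; ring)
      have := H2.tc.cont
      fun_prop
    have i2 := (int_sq H2.tc.cont H2.2.1).const_mul (1/4/ρ^2)
    rw [← integral_const_mul, ← integral_sub i1 i2, H2.lForm_full]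
    refine integral_mono (i1.sub i2) (H2.int_full a p (hW _ H2)) fun x => ?_
    simp only
    have hz : x ≤ ρ → Real.sin (θ x) * g x = 0 := by
      intro hx
      rcases le_or_gt x 0 with hx0 | hx0
      · rw [H.zero hx0]; simp
      · rw [hθ0 x hx0 hx]; simp
    rcases le_or_gt x ρ with hx | hx
    · rw [hz hx]; simp
    · rw [hap x hx.le]
      have : x⁻¹^2 ≤ 1/ρ^2 := by
        rw [inv_pow, ← one_div]; gcongr
      have := mul_le_mul_of_nonneg_right this (sq_nonneg (Real.sin (θ x) * g x))
      have e : 1/4/ρ^2 = 1/4*(1/ρ^2) := by ring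
      rw [e]; push_cast; nlinarith
  have n2 : 0 ≤ ∫ x, (Real.cos (θ x) * g x)^2 := integral_nonneg fun x => sq_nonneg _
  have hKs : K / ρ^2 = 1/4/ρ^2 + (Real.pi/2*C1)^2/ρ^2 := by rw [hK]; ring
  have q : 0 ≤ 1/4/ρ^2 := by positivity
  rw [← hN] at hims ⊢
  rw [hKs] at hρη
  have n3 : 0 ≤ ∫ x, (Real.sin (θ x) * g x)^2 := integral_nonneg fun x => sq_nonneg _
  generalize (∫ x, (Real.sin (θ x) * g x)^2) = N2 at *
  generalize (∫ x, (Real.cos (θ x) * g x)^2) = N1 at *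
  nlinarith [mul_nonneg q n2, mul_le_mul_of_nonneg_right hρη (add_nonneg n2 n3)]

lemma bad_infinite (a : ℝ → ℝ) (hm : ¬ AEStronglyMeasurable a (volume.restrict (Ioi (0:ℝ)))) :
    {x : ℝ | 0 < x ∧ ∀ ε > 0, ¬ AEStronglyMeasurable a (volume.restrict (Metric.ball x ε))}.Infinite := by
  intro hfin
  apply hm
  set K := {x : ℝ | 0 < x ∧ ∀ ε > 0, ¬ AEStronglyMeasurable a (volume.restrict (Metric.ball x ε))} with hK
  have hgood : ∀ x : ℝ, ∃ ε > 0, x ∈ Ioi (0:ℝ) \ K →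
      AEStronglyMeasurable a (volume.restrict (Metric.ball x ε)) := by
    intro x
    by_cases hx : x ∈ Ioi (0:ℝ) \ K
    · by_contra hcon
      push Not at hcon
      exact hx.2 ⟨hx.1, fun ε hε => (hcon ε hε).2⟩
    · exact ⟨1, one_pos, fun h => absurd h hx⟩
  choose ε hε hgood using hgood
  obtain ⟨t, hts, htc, hcov⟩ := TopologicalSpace.countable_cover_nhdsWithin
    (f := fun x => Metric.ball x (ε x)) (s := Ioi (0:ℝ) \ K)
    (fun x _ => mem_nhdsWithin_of_mem_nhds (Metric.ball_mem_nhds x (hε x)))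
  have hc2 : Countable t := htc.to_subtype
  have h1 : AEStronglyMeasurable a (volume.restrict (⋃ x : t, Metric.ball (x:ℝ) (ε x))) :=
    aestronglyMeasurable_iUnion_iff.2 fun x => hgood x (hts x.2)
  have h2 : AEStronglyMeasurable a (volume.restrict (Ioi (0:ℝ) \ K)) := by
    refine h1.mono_measure (Measure.restrict_mono ?_ le_rfl)
    rw [iUnion_coe_set]; exact hcov
  have h3 : (volume.restrict (Ioi (0:ℝ) \ K)) = volume.restrict (Ioi (0:ℝ)) :=
    Measure.restrict_congr_set (diff_null_ae_eq_self (hfin.measure_zero _))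
  rwa [h3] at h2

lemma nonmeas_zero (a : ℝ → ℝ)
    (ha : ∀ R > (0:ℝ), IntegrableOn (fun r => (a r) ^ 2 * r) (Set.Ioc 0 R)) (p : ℝ) (hp : p ≠ 0)
    (g : ℝ → ℝ) (H : IsTestR g) (x : ℝ) (hx : 0 < x) (hgx : g x ≠ 0)
    (hbad : ∀ ε > 0, ¬ AEStronglyMeasurable a (volume.restrict (Metric.ball x ε))) :
    lForm a 0 p g = 0 := by
  rw [H.lForm_full]
  refine integral_undef fun hi => ?_
  have hW := (H.intW_of a p hi).aestronglyMeasurable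
  have hU : {y | g y ≠ 0} ∩ Ioi (x/2) ∈ nhds x :=
    ((isOpen_ne_fun H.tc.cont continuous_const).inter isOpen_Ioi).mem_nhds ⟨hgx, by simp; linarith⟩
  obtain ⟨ε, hε, hsub⟩ := Metric.mem_nhds_iff.1 hU
  set δ := min ε 1 with hδ
  have hδ0 : 0 < δ := lt_min hε one_pos
  have hsub2 : Metric.ball x δ ⊆ Metric.ball x ε := Metric.ball_subset_ball (min_le_left _ _)
  apply hbad δ hδ0
  have h2 : AEStronglyMeasurable (fun r => (a r)^2) (volume.restrict (Metric.ball x δ)) := by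
    refine (a2_int a ha (x/2) (by positivity) (x+1)).aestronglyMeasurable.mono_measure
      (Measure.restrict_mono ?_ le_rfl)
    intro y hy
    have h1 := (hsub (hsub2 hy)).2
    rw [Metric.mem_ball, Real.dist_eq] at hy
    have h3 := (abs_lt.1 hy).2
    have h4 : δ ≤ 1 := min_le_right _ _
    exact ⟨le_of_lt h1, by linarith⟩
  have hg' : AEStronglyMeasurable (fun y => ((g y)^2)⁻¹) (volume.restrict (Metric.ball x δ)) := by
    have := H.tc.cont
    exact (by fun_prop : Measurable fun y => ((g y)^2)⁻¹).aestronglyMeasurable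
  have h3 := (((hW.mono_measure (Measure.restrict_le_self (s := Metric.ball x δ))).mul hg').sub h2).sub
    (aestronglyMeasurable_const (b := p^2))
  have h4 := h3.const_mul (1/(2*p))
  refine h4.congr ?_
  filter_upwards [ae_restrict_mem Metric.isOpen_ball.measurableSet] with y hy
  have hgy : g y ≠ 0 := (hsub (hsub2 hy)).1
  simp only [Pi.sub_apply, Pi.mul_apply]
  field_simp
  ring

open Polynomial in
lemma nonmeas_le (a : ℝ → ℝ)
    (ha : ∀ R > (0:ℝ), IntegrableOn (fun r => (a r) ^ 2 * r) (Set.Ioc 0 R))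
    (hm : ¬ AEStronglyMeasurable a (volume.restrict (Ioi (0:ℝ)))) (n : ℕ) (hn : 1 ≤ n)
    (p : ℝ) (hp : p ≠ 0) : muRadial a 0 n p ≤ 0 := by
  obtain ⟨t, htK, htn⟩ := (bad_infinite a hm).exists_subset_card_eq n
  have hne : t.Nonempty := by rw [← Finset.card_pos]; omega
  obtain ⟨w, hw, hwx⟩ := exists_bump (t.min' hne) (t.max' hne + 1) (htK (t.min'_mem hne)).1
    (by linarith [t.min'_le_max' hne])
  refine mu_le a n hn p 0 (fam w 0 n) (fam_test w hw 0 n) (fam_li w 0 n ?_) ?_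
  · exact (Icc_infinite (by linarith [t.min'_le_max' hne])).mono hwx
  intro g hg hg0
  have H := IsTestR.span (fam_test w hw 0 n) hg
  obtain ⟨P, hP, rfl⟩ := fam_span w 0 n hn g hg
  have : ∃ x ∈ t, P.eval x ≠ 0 := by
    by_contra hcon
    push Not at hcon
    apply hg0
    have : P = 0 := Polynomial.eq_zero_of_natDegree_lt_card_of_eval_eq_zero' P t hcon (by omega)
    ext r; simp [this]
  obtain ⟨x, hxt, hPx⟩ := this
  have hxK := htK hxt
  rw [nonmeas_zero a ha p hp _ H x hxK.1 ?_ hxK.2]; · simp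
  simp only [sub_zero]
  exact mul_ne_zero (hwx x ⟨t.min'_le x hxt, by linarith [t.le_max' x hxt]⟩) hPx

lemma mu_zero_pos (b₀ : ℝ) (hb₀ : 0 < b₀) (a : ℝ → ℝ)
    (ha : ∀ R > (0:ℝ), IntegrableOn (fun r => (a r) ^ 2 * r) (Set.Ioc 0 R))
    (r₁ c : ℝ) (hlin : ∀ r ≥ r₁, a r = b₀ * r + c) (n : ℕ) (hn : 1 ≤ n) :
    0 < muRadial a 0 n 0 := by
  set R0 := 1 + |r₁| + (1 + |c|)/b₀ with hR0
  have hq : 0 ≤ (1+|c|)/b₀ := by positivity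
  have hR0p : 0 < R0 := by positivity
  have hlarge : ∀ x ≥ R0, 1 ≤ a x := by
    intro x hx
    rw [hlin x (by linarith [le_abs_self r₁])]
    have : (1+|c|)/b₀ ≤ x := by linarith [abs_nonneg r₁]
    rw [div_le_iff₀ hb₀] at this
    linarith [neg_abs_le c]
  have hW : ∀ g, IsTestR g → Integrable (fun x => (a x + 0)^2 * (g x)^2) := fun g H => by
    simp only [add_zero]
    exact intW_core H _ (a2_int a ha)
  have hC : 0 < 4 * R0^2 + 2/1 := by positivity
  refine lt_of_lt_of_le (b := 1/(4 * R0^2 + 2/1)) (by positivity) ?_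
  refine mu_ge' a n hn 0 _ hW fun g H => ?_
  have := H.coerc a 0 (hW g H) R0 1 hR0p one_pos (Ioo 0 R0) measurableSet_Ioo (by simp) (by
    intro x hx hxE
    have : 1 ≤ a x := hlarge x (by by_contra h; exact hxE ⟨hx, not_le.1 h⟩)
    nlinarith)
  rw [one_div, inv_mul_le_iff₀ hC]
  exact this

/-- Theorem 4.10 of the paper: for a field which is constant (`a'(r) = b₀ > 0`) for large `r`,
each function `p ↦ μ_{n,0}(p)` is not monotone on `ℝ`; moreover, for the linear potential
`a(r) = b₀ r` the monotonicity is lost already for `p ≤ 0`. -/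
theorem muRadial_not_monotone (b₀ : ℝ) (hb₀ : 0 < b₀) (a : ℝ → ℝ)
    (ha : ∀ R > (0:ℝ), IntegrableOn (fun r => (a r) ^ 2 * r) (Set.Ioc 0 R))
    (habd : ∀ R > (0:ℝ), ∃ C : ℝ, ∀ r ∈ Set.Icc (0:ℝ) R, a r ≤ C)
    (hab : ∃ r₁ > (0:ℝ), ∀ r ≥ r₁, HasDerivAt a b₀ r) :
    ∀ n : ℕ, 1 ≤ n →
      ((∃ p₁ p₂ : ℝ, p₁ < p₂ ∧ muRadial a 0 n p₂ < muRadial a 0 n p₁) ∧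
       (∃ p₃ p₄ : ℝ, p₃ < p₄ ∧ muRadial a 0 n p₃ < muRadial a 0 n p₄)) ∧
      ((∀ r ≥ (0:ℝ), a r = b₀ * r) →
        ∃ p₁ p₂ : ℝ, p₁ < p₂ ∧ p₂ ≤ 0 ∧ muRadial a 0 n p₂ < muRadial a 0 n p₁) := by
  intro n hn
  obtain ⟨r₁, hr₁, hd⟩ := hab
  obtain ⟨c, hlin⟩ := a_linear b₀ a r₁ hd
  by_cases hm : AEStronglyMeasurable a (volume.restrict (Ioi (0:ℝ)))
  · obtain ⟨p₂, hp₂, hμ⟩ := mu_upper b₀ hb₀ a ha r₁ c hlin hm n hn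
    obtain ⟨P0, hP0⟩ := mu_lower b₀ hb₀ a ha habd r₁ c hlin hm n hn
      (((2 * (n-1 : ℕ) + 1) * b₀ - muRadial a 0 n p₂)/2) (by linarith)
    have hlt : min P0 (p₂ - 1) < p₂ := (min_le_right _ _).trans_lt (by linarith)
    have hμ2 : muRadial a 0 n p₂ < muRadial a 0 n (min P0 (p₂ - 1)) := by
      have := hP0 _ (min_le_left P0 (p₂ - 1))
      linarith
    obtain ⟨p₄, hp₄, hT⟩ := mu_tendsto b₀ hb₀ a ha r₁ c hlin hm n hn
      (max (muRadial a 0 n 0) 0 + 1) (by positivity) 0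
    refine ⟨⟨⟨_, _, hlt, hμ2⟩, ⟨0, p₄, hp₄, ?_⟩⟩, fun _ => ⟨_, _, hlt, hp₂, hμ2⟩⟩
    linarith [le_max_left (muRadial a 0 n 0) 0]
  · have h0 := mu_zero_pos b₀ hb₀ a ha r₁ c hlin n hn
    refine ⟨⟨⟨0, 1, one_pos, ?_⟩, ⟨-1, 0, by norm_num, ?_⟩⟩, fun h => absurd ?_ hm⟩
    · exact (nonmeas_le a ha hm n hn 1 one_ne_zero).trans_lt h0
    · exact (nonmeas_le a ha hm n hn (-1) (by norm_num)).trans_lt h0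
    · have hc : Continuous fun r : ℝ => b₀ * r := by fun_prop
      refine hc.aestronglyMeasurable.congr ?_
      filter_upwards [ae_restrict_mem measurableSet_Ioi] with r hr
      exact (h r (le_of_lt hr)).symm
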